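/- arXiv:1607.05889 — 8 statements merged into one kernel-verified Lean document; each statement's English description precedes it below -/
import Mathlib

section
/- For all j, k ∈ F_q, the identity P(j,k) = V(j)·V(k) holds (Katz's mixed character sum identity, valid for every odd prime power q with q ≡ 1 (mod 4)). -/
/-!
Write `φ = A₄²`, `i² = -1`, `q = |F|`. Both sides of the identity are reduced to sums
`∑ φ(z) K(A(z), B(z))` of ordinary Kloosterman sums `K(A, B) = ∑ₜ ψ(A/t + a B t)`, and `K(A, B)`
depends only on the product `A B`, apart from an extra `q` when `A = B = 0` (`kloo_eq`).

* On the side of `P`, expanding `G(φ) φ(a/x - x)` as a Gauss sum in `y` gives `K(p - y, r + y)`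
  with `p = (j+k)²`, `r = (j-k)²` (`gauss_mul_sum`). Here `(p-y)(r+y) = (j²+k²)² - (y-2jk)²`.
* On the side of `V`, take `j k ≠ 0`. The substitution `(x, y) ↦ (a j⁴/x, a k⁴/y)` shows that only
  pairs with `φ(a x y) = 1` contribute to the double sum for `V(j) V(k)`. Writing `y = a x t²` and
  `z = x t` turns it into `K(z + k⁴/z, z + j⁴/z)` twisted by `φ(z)` (`product_formula`). The product
  of the two coefficients is `(j²+k²)² + (z - j²k²/z)²`.

The products match under `y - 2jk = i (z - j²k²/z)`, that is `y = i (z - i j k)²/z`, for which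
`φ(y) = φ(i) φ(z)`; counting its fibres gives `twisted_even_sum`. The extra terms from
`A = B = 0`, present when `j⁴ = k⁴` on one side and when `j² = -k²` on the other, differ exactly by
the two delta terms of `P`. The definition of `V(0)` makes the same computation work when `j` or
`k` vanishes.
-/

open Finset

noncomputable section

variable {F : Type} [Field F] [Fintype F] [DecidableEq F]

/-- Katz's mixed character sum `P(j,k)`; the quadratic character `φ` is `A₄ ^ 2`. -/
def Pkatz (ψ : AddChar F ℂ) (A₄ : MulChar F ℂ) (a : F) (j k : F) : ℂ :=
  (if j = k then 1 else 0) + (A₄ ^ 2) (-1) * (if j = -k then 1 else 0) +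
    (gaussSum (A₄ ^ 2) ψ)⁻¹ *
      ∑ x ∈ univ.filter (fun x : F => x ≠ 0),
        (A₄ ^ 2) (a / x - x) * ψ (x * (j + k) ^ 2 + (a / x) * (j - k) ^ 2)

/-- Katz's sums `V(j)`. -/
def Vkatz (ψ : AddChar F ℂ) (A₄ : MulChar F ℂ) (a : F) (τ : ℂ) (j : F) : ℂ :=
  if j = 0 then gaussSum A₄ ψ / τ + τ / gaussSum A₄ ψ
  else τ⁻¹ * ∑ x ∈ univ.filter (fun x : F => x ≠ 0), A₄ x * ψ (x + a * j ^ 4 / x)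

/-- The finite field hypergeometric function `₂F₁(A,B;C|x)`. -/
def hyp2F1 (A B C : MulChar F ℂ) (x : F) : ℂ :=
  ((1 : MulChar F ℂ) x / (Fintype.card F : ℂ)) *
    ∑ y : F, B y * (B⁻¹ * C) (y - 1) * A⁻¹ (1 - x * y)

/-- The Jacobi sum `J(A,B)`. -/
def Jsum (A B : MulChar F ℂ) : ℂ := ∑ y : F, A y * B (1 - y)

/-- The sum `h(D,j)`; the quadratic character `φ` is `A₄ ^ 2`. -/
def hKatz (A₄ D : MulChar F ℂ) (j : F) : ℂ :=
  ∑ x ∈ univ.filter (fun x : F => x ≠ 0),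
    D x * (A₄ ^ 2) (1 - x) * ((D⁻¹ ^ 2) * A₄ ^ 2) (x * (j + 1) ^ 2 + (j - 1) ^ 2)

/-- The sum `H(λ₁)`; the quadratic character `φ` is `A₄ ^ 2`. -/
def Hkatz (A₄ lam : MulChar F ℂ) (a : F) : ℂ :=
  ∑ p ∈ (univ ×ˢ univ).filter
      (fun p : F × F => p.1 ≠ 0 ∧ p.2 ≠ 0 ∧
        p.2 * (p.1 + 1) ^ 2 + a * (p.1 - 1) ^ 2 / p.2 = 0),
    (lam ^ 2 * A₄ ^ 2) p.1 * (A₄ ^ 2) (p.2 - a / p.2)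

/-- The Mellin transform `S(χ)` of the sums `V(j)`. -/
def Smel (ψ : AddChar F ℂ) (A₄ : MulChar F ℂ) (a : F) (τ : ℂ) (χ : MulChar F ℂ) : ℂ :=
  ∑ j ∈ univ.filter (fun j : F => j ≠ 0), χ j * Vkatz ψ A₄ a τ j

/-- The Mellin transform `T(χ)` of the sums `P(j,0)`. -/
def Tmel (ψ : AddChar F ℂ) (A₄ : MulChar F ℂ) (a : F) (χ : MulChar F ℂ) : ℂ :=
  ∑ j ∈ univ.filter (fun j : F => j ≠ 0), χ j * Pkatz ψ A₄ a j 0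

/-- The double Mellin transform `T(χ₁,χ₂)` of the sums `P(j,k)`. -/
def Tmel2 (ψ : AddChar F ℂ) (A₄ : MulChar F ℂ) (a : F) (χ₁ χ₂ : MulChar F ℂ) : ℂ :=
  ∑ j ∈ univ.filter (fun j : F => j ≠ 0), ∑ k ∈ univ.filter (fun k : F => k ≠ 0),
    χ₁ j * χ₂ k * Pkatz ψ A₄ a j k

end

section Helpers

/-! ### Sums over units and Kloosterman sums -/

set_option linter.unusedSectionVars false

variable {F : Type} [Field F] [Fintype F] [DecidableEq F]

lemma sum_ne_zero_eq_units (f : F → ℂ) :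
    ∑ x ∈ univ.filter (fun x : F => x ≠ 0), f x = ∑ u : Fˣ, f u := by
  symm
  refine Finset.sum_bij (fun u _ => (u : F)) ?_ ?_ ?_ ?_
  · intro u _; simp
  · intro u _ v _ h; exact Units.ext h
  · intro x hx; exact ⟨Units.mk0 x (by simpa using hx), by simp, rfl⟩
  · intro u _; rfl

lemma sum_eq_zero_add_units (f : F → ℂ) : ∑ x : F, f x = f 0 + ∑ u : Fˣ, f u := by
  rw [← sum_ne_zero_eq_units, ← Finset.sum_filter_add_sum_filter_not univ (fun x : F => x = 0)]
  congr 1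
  rw [Finset.filter_eq' univ (0 : F)]; simp

lemma sum_units_addChar {ψ : AddChar F ℂ} (hψ : ψ ≠ 1) {b : F} (hb : b ≠ 0) :
    ∑ t : Fˣ, ψ (b * t) = -1 := by
  have h := AddChar.sum_eq_zero_of_ne_one hψ
  rw [sum_eq_zero_add_units, AddChar.map_zero_eq_one] at h
  have h2 : ∑ t : Fˣ, ψ (b * t) = ∑ t : Fˣ, ψ t :=
    Fintype.sum_equiv (Equiv.mulLeft (Units.mk0 b hb)) _ _ (fun t => by simp)
  rw [h2]; linear_combination h

/-- The Kloosterman sum `∑ ψ (A / t + a B t)` over the units `t`. -/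
noncomputable def kloo (ψ : AddChar F ℂ) (a A B : F) : ℂ := ∑ t : Fˣ, ψ (A * (t : F)⁻¹ + a * B * t)

/-- A Kloosterman sum depends on its two coefficients only through their product, up to a
correction when both vanish. -/
lemma kloo_eq {ψ : AddChar F ℂ} (hψ : ψ ≠ 1) {a : F} (ha : a ≠ 0) (A B : F) :
    kloo ψ a A B = kloo ψ a 1 (A * B) +
      if A = 0 ∧ B = 0 then (Fintype.card F : ℂ) else 0 := by
  have hone : kloo ψ a 1 0 = -1 := by
    rw [← sum_units_addChar hψ one_ne_zero]
    exact Fintype.sum_equiv (Equiv.inv Fˣ) _ _ (fun t => by simp)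
  by_cases hA : A = 0
  · subst hA
    rw [zero_mul, hone]
    by_cases hB : B = 0
    · subst hB
      have h := sum_eq_zero_add_units (F := F) (fun _ => (1 : ℂ))
      simp only [Finset.sum_const, Finset.card_univ, nsmul_eq_mul, mul_one] at h
      simp [kloo, h]
    · simp only [kloo, hB, and_false, if_false, zero_mul, zero_add, add_zero]
      exact sum_units_addChar hψ (mul_ne_zero ha hB)
  · simp only [hA, false_and, if_false, add_zero]
    refine (Fintype.sum_equiv (Equiv.mulLeft (Units.mk0 A hA)) _ _ (fun t => ?_)).symm
    congr 1
    have := t.ne_zero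
    simp only [Equiv.coe_mulLeft, Units.val_mul, Units.val_mk0]
    field_simp

/-! ### Characters of order two -/

variable {φ : MulChar F ℂ}

lemma quad_sq (hφ2 : φ ^ 2 = 1) {t : F} (ht : t ≠ 0) : φ t * φ t = 1 := by
  have h : (φ ^ 2) t = 1 := by rw [hφ2]; exact MulChar.one_apply ht.isUnit
  rwa [MulChar.pow_apply' _ two_ne_zero, pow_two] at h

/-- A character of order two is the quadratic character. -/
lemma quad_eq (hφ2 : φ ^ 2 = 1) (hφ1 : φ ≠ 1) (s : F) : φ s = (quadraticChar F s : ℂ) := by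
  by_cases hs : s = 0
  · subst hs; simp [MulChar.map_zero]
  by_cases hsq : IsSquare s
  · obtain ⟨t, rfl⟩ := hsq
    have ht : t ≠ 0 := fun h => hs (by simp [h])
    rw [map_mul, quad_sq hφ2 ht, (quadraticChar_one_iff_isSquare hs).2 ⟨t, rfl⟩]; simp
  · rw [quadraticChar_neg_one_iff_not_isSquare.2 hsq]
    obtain ⟨b, hb⟩ := MulChar.ne_one_iff.1 hφ1
    have hbsq : ¬ IsSquare (b : F) := by
      rintro ⟨t, ht⟩
      have ht0 : t ≠ 0 := fun h => b.ne_zero (by simp [ht, h])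
      exact hb (by rw [ht, map_mul, quad_sq hφ2 ht0])
    have hbs : IsSquare (s * b) := by
      rw [← quadraticChar_one_iff_isSquare (mul_ne_zero hs b.ne_zero), map_mul,
        quadraticChar_neg_one_iff_not_isSquare.2 hsq,
        quadraticChar_neg_one_iff_not_isSquare.2 hbsq]; norm_num
    obtain ⟨t, ht⟩ := hbs
    have ht0 : t ≠ 0 := fun h => mul_ne_zero hs b.ne_zero (by simp [ht, h])
    have h1 : φ s * φ b = 1 := by rw [← map_mul, ht, map_mul, quad_sq hφ2 ht0]
    have h2 : φ b = -1 := by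
      rcases mul_self_eq_one_iff.1 (quad_sq hφ2 b.ne_zero) with h | h
      · exact absurd h hb
      · exact h
    rw [h2] at h1; push_cast; linear_combination -h1

lemma card_sqrt (hc : ringChar F ≠ 2) (hφ2 : φ ^ 2 = 1) (hφ1 : φ ≠ 1) (s : F) :
    (((univ.filter fun x : F => x ^ 2 = s).card : ℕ) : ℂ) = 1 + φ s := by
  have h := quadraticChar_card_sqrts hc s
  rw [quad_eq hφ2 hφ1]
  have h3 : (univ.filter fun x : F => x ^ 2 = s) = {x : F | x ^ 2 = s}.toFinset := by
    ext; simp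
  rw [h3]
  have h2 := congrArg (fun n : ℤ => (n : ℂ)) h
  push_cast at h2
  rw [h2]; ring

lemma sum_units_sq (hc : ringChar F ≠ 2) (hφ2 : φ ^ 2 = 1) (hφ1 : φ ≠ 1) (f : F → ℂ) :
    ∑ t : Fˣ, f ((t : F) ^ 2) = ∑ s : Fˣ, (1 + φ s) * f s := by
  have h : ∑ t : F, f (t ^ 2) = ∑ s : F, (1 + φ s) * f s := by
    rw [← Finset.sum_fiberwise univ (fun t : F => t ^ 2) (fun t => f (t ^ 2))]
    refine Finset.sum_congr rfl fun s _ => ?_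
    rw [← card_sqrt hc hφ2 hφ1, ← nsmul_eq_mul, ← Finset.sum_const]
    refine Finset.sum_congr rfl fun t ht => ?_
    rw [(Finset.mem_filter.1 ht).2]
  rw [sum_eq_zero_add_units, sum_eq_zero_add_units (fun s => (1 + φ s) * f s)] at h
  simpa [MulChar.map_zero] using h

lemma gauss_shift (hφ2 : φ ^ 2 = 1) (hφ1 : φ ≠ 1) (ψ : AddChar F ℂ) (b : F) :
    gaussSum φ ψ * φ b = ∑ y : F, φ y * ψ (y * b) := by
  by_cases hb : b = 0
  · subst hb; simp [MulChar.map_zero, MulChar.sum_eq_zero_of_ne_one hφ1]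
  · have h := gaussSum_mulShift φ ψ (Units.mk0 b hb)
    rw [← h, Units.val_mk0]
    have h2 := quad_sq hφ2 hb
    simp only [gaussSum, AddChar.mulShift_apply]
    simp_rw [mul_comm b]
    linear_combination (∑ y : F, φ y * ψ (y * b)) * h2

/-- The sum in `P(j,k)`, times the quadratic Gauss sum, as a twisted sum of Kloosterman sums. -/
lemma gauss_mul_sum (hφ2 : φ ^ 2 = 1) (hφ1 : φ ≠ 1) (ψ : AddChar F ℂ) (a p r : F) :
    gaussSum φ ψ * ∑ x : Fˣ, φ (a / x - x) * ψ (x * p + a / x * r) =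
      ∑ y : F, φ y * kloo ψ a (p - y) (r + y) := by
  simp_rw [kloo, Finset.mul_sum]
  rw [Finset.sum_comm]
  refine Fintype.sum_equiv (Equiv.inv Fˣ) _ _ (fun x => ?_)
  rw [← mul_assoc, gauss_shift hφ2 hφ1, Finset.sum_mul]
  refine Finset.sum_congr rfl fun y _ => ?_
  rw [mul_assoc, ← AddChar.map_add_eq_mul]
  congr 2
  simp only [Equiv.inv_apply, Units.val_inv_eq_inv_val, inv_inv]
  ring

/-! ### The change of variables -/

/-- The fibres of `z ↦ i (z - n i)² / z`, weighted by the quadratic character. -/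
lemma fibre_sum (hc : ringChar F ≠ 2) (hφ2 : φ ^ 2 = 1) (hφ1 : φ ≠ 1) {i : F}
    (hi : i * i = -1) {n : F} (hn : n ≠ 0) (y : F) :
    ∑ z ∈ univ.filter (fun z : Fˣ => i * (z - n ^ 2 / z) + 2 * n = y), φ z =
      φ i * (φ y + φ (y - 4 * n)) := by
  have h2 : (2 : F) ≠ 0 := Ring.two_ne_zero hc
  have hi0 : i ≠ 0 := by rintro rfl; simp at hi
  have hm1 : φ (-1) = 1 := by rw [← hi, map_mul, quad_sq hφ2 hi0]
  have key : ∀ z : Fˣ, i * (z - n ^ 2 / z) + 2 * n = i * ((z : F) - i * n) ^ 2 * (z : F)⁻¹ := by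
    intro z
    have := z.ne_zero
    field_simp
    linear_combination (2 * n * z - i * n ^ 2) * hi
  by_cases hy : y = 0
  · subst hy
    have : univ.filter (fun z : Fˣ => i * (z - n ^ 2 / z) + 2 * n = 0) =
        {Units.mk0 (i * n) (mul_ne_zero hi0 hn)} := by
      ext z
      simp only [Finset.mem_filter, Finset.mem_univ, true_and, Finset.mem_singleton, key]
      simp only [mul_eq_zero, hi0, inv_eq_zero, z.ne_zero, false_or, or_false, ne_eq,
        OfNat.ofNat_ne_zero, not_false_eq_true, pow_eq_zero_iff, sub_eq_zero, Units.ext_iff,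
        Units.val_mk0]
    rw [this, Finset.sum_singleton, Units.val_mk0, map_mul, MulChar.map_zero, zero_sub, zero_add]
    have : φ (-(4 * n)) = φ n := by
      rw [show -(4 * n) = (-1) * (2 * 2 * n) by ring, map_mul, map_mul, map_mul, hm1,
        quad_sq hφ2 h2]; ring
    rw [this]
  · have hval : ∀ z ∈ univ.filter (fun z : Fˣ => i * (z - n ^ 2 / z) + 2 * n = y),
        φ z = φ i * φ y := by
      intro z hz
      have hz := (Finset.mem_filter.1 hz).2
      rw [key] at hz
      have h0 : (z : F) - i * n ≠ 0 := by
        intro h; rw [h] at hz; exact hy (by rw [← hz]; ring)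
      have h1 : i * y * z = (-1) * (((z : F) - i * n) * ((z : F) - i * n)) := by
        rw [← hz, ← hi]; field_simp [z.ne_zero]
      have h3 := congrArg φ h1
      rw [map_mul, map_mul, map_mul, map_mul, hm1, quad_sq hφ2 h0] at h3
      have h4 := quad_sq hφ2 z.ne_zero
      linear_combination (-φ z) * h3 + φ i * φ y * h4
    rw [Finset.sum_congr rfl hval, Finset.sum_const, nsmul_eq_mul]
    have hcard : (univ.filter (fun z : Fˣ => i * (z - n ^ 2 / z) + 2 * n = y)).card =
        (univ.filter (fun w : F => w ^ 2 = -1 * (y * (y - 4 * n)))).card := by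
      refine Finset.card_bij (fun z _ => 2 * (z : F) - (2 * i * n - i * y)) ?_ ?_ ?_
      · intro z hz
        simp only [Finset.mem_filter, Finset.mem_univ, true_and] at hz ⊢
        have := z.ne_zero
        field_simp at hz
        linear_combination (-4 * i) * hz + (-4*n*y+y^2+4*n^2+4*z^2-4*n^2) * hi
      · intro z _ z' _ h
        have h : 2 * (z : F) - (2 * i * n - i * y) = 2 * (z' : F) - (2 * i * n - i * y) := h
        exact Units.ext (mul_left_cancel₀ h2 (by linear_combination h))
      · intro w hw
        simp only [Finset.mem_filter, Finset.mem_univ, true_and] at hw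
        have hz0 : (w + (2 * i * n - i * y)) / 2 ≠ 0 := by
          intro h
          have h : w = -(2 * i * n - i * y) := by
            field_simp at h; linear_combination h
          rw [h] at hw
          have : (2 * 2 : F) * n ^ 2 = 0 := by
            linear_combination (-1 : F) * hw + (4 * n ^ 2 - 4 * n * y + y ^ 2) * hi
          exact mul_ne_zero (mul_ne_zero h2 h2) (pow_ne_zero 2 hn) this
        refine ⟨Units.mk0 _ hz0, ?_, ?_⟩
        · simp only [Finset.mem_filter, Finset.mem_univ, true_and, Units.val_mk0]
          generalize hZ : (w + (2 * i * n - i * y)) / 2 = z at hz0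
          have hw' : w = 2 * z - (2 * i * n - i * y) := by rw [← hZ]; field_simp; ring
          subst hw'
          field_simp
          refine mul_left_cancel₀ (mul_ne_zero h2 h2) (mul_left_cancel₀ hi0 ?_)
          linear_combination (-1 : F) * hw + (-4*n*y+y^2+4*n^2+4*z^2-4*n^2) * hi
        · simp only [Units.val_mk0]; field_simp; ring
    rw [hcard, card_sqrt hc hφ2 hφ1, map_mul, map_mul, hm1]
    linear_combination φ i * φ (y - 4 * n) * quad_sq hφ2 hy

/-- The change of variables `y = i (z - n²/z) + 2n = i (z - n i)² / z`, under which
`φ(y) = φ(i) φ(z)`; evenness of `g` merges the two terms of `fibre_sum`. -/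
lemma twisted_even_sum (hc : ringChar F ≠ 2) (hφ2 : φ ^ 2 = 1) (hφ1 : φ ≠ 1) {i : F}
    (hi : i * i = -1) {n : F} (hn : n ≠ 0) (g : F → ℂ) (hg : ∀ w, g (-w) = g w) :
    ∑ z : Fˣ, φ z * g (i * (z - n ^ 2 / z)) = 2 * φ i * ∑ y : F, φ y * g (y - 2 * n) := by
  have h1 : ∑ y : F, φ (y - 4 * n) * g (y - 2 * n) = ∑ y : F, φ y * g (y - 2 * n) := by
    have hi0 : i ≠ 0 := by rintro rfl; simp at hi
    have hm1 : φ (-1) = 1 := by rw [← hi, map_mul, quad_sq hφ2 hi0]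
    refine Fintype.sum_equiv (Equiv.subLeft (4 * n)) _ _ (fun y => ?_)
    simp only [Equiv.subLeft_apply]
    rw [← hg, show y - 4 * n = (-1) * (4 * n - y) by ring, map_mul, hm1, one_mul]
    congr 2; ring
  calc ∑ z : Fˣ, φ z * g (i * (z - n ^ 2 / z))
      = ∑ y : F, φ i * (φ y + φ (y - 4 * n)) * g (y - 2 * n) := by
        rw [← Finset.sum_fiberwise univ (fun z : Fˣ => i * (z - n ^ 2 / z) + 2 * n)]
        refine Finset.sum_congr rfl fun y _ => ?_
        rw [← fibre_sum hc hφ2 hφ1 hi hn, Finset.sum_mul]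
        refine Finset.sum_congr rfl fun z hz => ?_
        rw [← (Finset.mem_filter.1 hz).2, add_sub_cancel_right]
    _ = φ i * (∑ y : F, φ y * g (y - 2 * n) + ∑ y : F, φ (y - 4 * n) * g (y - 2 * n)) := by
        rw [← Finset.sum_add_distrib, Finset.mul_sum]
        exact Finset.sum_congr rfl fun y _ => by ring
    _ = _ := by rw [h1]; ring

/-! ### Products of twisted Kloosterman sums -/

/-- The twisted Kloosterman sum `∑ χ(x) ψ (x + b / x)` over the units `x`. -/
noncomputable def twKloo (ψ : AddChar F ℂ) (χ : MulChar F ℂ) (b : F) : ℂ :=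
  ∑ x : Fˣ, χ x * ψ (x + b / x)

lemma twKloo_zero (ψ : AddChar F ℂ) (χ : MulChar F ℂ) : twKloo ψ χ 0 = gaussSum χ ψ := by
  rw [gaussSum, sum_eq_zero_add_units]
  simp [twKloo, MulChar.map_zero]

/-- The substitution `x ↦ b / x`. -/
lemma twKloo_flip (ψ : AddChar F ℂ) (χ : MulChar F ℂ) {b : F} (hb : b ≠ 0) :
    twKloo ψ χ b = χ b * twKloo ψ χ⁻¹ b := by
  rw [twKloo, twKloo, Finset.mul_sum]
  refine Fintype.sum_equiv ((Equiv.inv Fˣ).trans (Equiv.mulLeft (Units.mk0 b hb))) _ _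
    (fun x => ?_)
  have hx := x.ne_zero
  simp only [Equiv.trans_apply, Equiv.inv_apply, Equiv.coe_mulLeft, Units.val_mul, Units.val_mk0,
    Units.val_inv_eq_inv_val, MulChar.inv_apply']
  rw [← mul_assoc, ← map_mul]
  congr 2
  · field_simp
  · field_simp; ring

lemma gauss_mul_inv {ψ : AddChar F ℂ} (hψ : ψ ≠ 1) {χ : MulChar F ℂ} (hχ : χ ≠ 1) :
    gaussSum χ ψ * gaussSum χ⁻¹ ψ = χ (-1) * Fintype.card F := by
  have h := gaussSum_mul_gaussSum_eq_card hχ (AddChar.IsPrimitive.of_ne_one hψ)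
  have h2 : gaussSum χ⁻¹ ψ = χ (-1) * gaussSum χ⁻¹ ψ⁻¹ := by
    rw [gaussSum, gaussSum, Finset.mul_sum]
    refine Fintype.sum_equiv (Equiv.neg F) _ _ (fun x => ?_)
    simp only [Equiv.neg_apply, MulChar.inv_apply', AddChar.inv_apply, neg_neg]
    rw [← mul_assoc, ← map_mul]
    congr 2
    rw [inv_neg, neg_mul_neg, one_mul]
  rw [h2, ← h]; ring

/-- Writing `y = a x t²`, which is possible exactly when `φ(a x y) = 1`, turns a symmetrised
product of twisted Kloosterman sums into a twisted sum of Kloosterman sums. -/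
lemma product_formula (hc : ringChar F ≠ 2) (ψ : AddChar F ℂ) {χ : MulChar F ℂ}
    (hχ4 : χ ^ 4 = 1) (hχ2 : χ ^ 2 ≠ 1) {a : F} (ha : a ≠ 0) (β γ : F) :
    twKloo ψ χ (a * β) * twKloo ψ χ (a * γ) +
        (χ a * twKloo ψ χ⁻¹ (a * β)) * (χ a * twKloo ψ χ⁻¹ (a * γ)) =
      χ a * ∑ z : Fˣ, (χ ^ 2) z * kloo ψ a (z + γ / z) (z + β / z) := by
  have hφ2 : (χ ^ 2) ^ 2 = 1 := by rw [← pow_mul]; exact hχ4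
  have hφ : ∀ u : F, (χ ^ 2) u = χ u * χ u := fun u => by
    rw [MulChar.pow_apply' _ two_ne_zero, pow_two]
  have hinv : ∀ u : F, χ⁻¹ u = χ u * (χ ^ 2) u := fun u => by
    rw [← MulChar.mul_apply, ← pow_succ']
    congr 1
    rw [inv_eq_iff_mul_eq_one, ← pow_succ', hχ4]
  have h1 : twKloo ψ χ (a * β) * twKloo ψ χ (a * γ) +
        (χ a * twKloo ψ χ⁻¹ (a * β)) * (χ a * twKloo ψ χ⁻¹ (a * γ)) =
      ∑ x : Fˣ, ∑ y : Fˣ, (1 + (χ ^ 2) (a * x * y)) *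
        (χ x * χ y * ψ (x + y + a * β / x + a * γ / y)) := by
    have e : ∀ x y : Fˣ, ψ ((x : F) + y + a * β / x + a * γ / y) =
        ψ (x + a * β / x) * ψ (y + a * γ / y) := fun x y => by
      rw [← AddChar.map_add_eq_mul]; congr 1; ring
    simp only [twKloo]
    rw [Finset.sum_mul_sum, Finset.mul_sum, Finset.mul_sum, Finset.sum_mul_sum,
      ← Finset.sum_add_distrib]
    refine Finset.sum_congr rfl fun x _ => ?_
    rw [← Finset.sum_add_distrib]
    refine Finset.sum_congr rfl fun y _ => ?_
    rw [e, hinv, hinv, map_mul, map_mul, hφ a]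
    ring
  have h2 : ∀ x : Fˣ, ∑ y : Fˣ, (1 + (χ ^ 2) (a * x * y)) *
        (χ x * χ y * ψ (x + y + a * β / x + a * γ / y)) =
      ∑ t : Fˣ, χ a * ((χ ^ 2) (x * t) *
        ψ (x + a * x * t ^ 2 + a * β / x + γ / (x * t ^ 2))) := by
    intro x
    have hx := x.ne_zero
    have h3 := sum_units_sq hc hφ2 hχ2 (fun s => χ x * χ (a * x * s) *
      ψ (x + (a * x * s) + a * β / x + a * γ / (a * x * s)))
    have h4 : ∀ t : Fˣ, χ a * ((χ ^ 2) (x * t) *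
        ψ (x + a * x * t ^ 2 + a * β / x + γ / (x * t ^ 2))) =
        χ x * χ (a * x * t ^ 2) *
      ψ (x + (a * x * t ^ 2) + a * β / x + a * γ / (a * x * t ^ 2)) := by
      intro t
      have ht := t.ne_zero
      have : a * γ / (a * x * t ^ 2) = γ / (x * t ^ 2) := by field_simp
      rw [this, hφ, map_mul, map_mul, map_mul, map_pow]
      ring
    rw [Finset.sum_congr rfl (fun t _ => h4 t), h3]
    symm
    refine Fintype.sum_equiv (Equiv.mulLeft (Units.mk0 a ha * x)) _ _ (fun s => ?_)
    simp only [Equiv.coe_mulLeft, Units.val_mul, Units.val_mk0]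
    have h5 : (χ ^ 2) (a * x * (a * x * s)) = (χ ^ 2) s := by
      rw [show a * (x : F) * (a * x * s) = (a * x) * (a * x) * s by ring, map_mul, map_mul,
        quad_sq hφ2 (mul_ne_zero ha hx), one_mul]
    rw [h5]
  rw [h1, Finset.sum_congr rfl (fun x _ => h2 x), Finset.sum_comm]
  simp_rw [kloo, Finset.mul_sum]
  rw [Finset.sum_comm (s := (univ : Finset Fˣ)) (t := (univ : Finset Fˣ))
    (f := fun z t : Fˣ => χ a * ((χ ^ 2) z *
      ψ ((z + γ / z) * (t : F)⁻¹ + a * (z + β / z) * t)))]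
  refine Finset.sum_congr rfl fun t _ => ?_
  refine Fintype.sum_equiv (Equiv.mulRight t) _ _ (fun x => ?_)
  have hx := x.ne_zero
  have ht := t.ne_zero
  simp only [Equiv.coe_mulRight, Units.val_mul]
  congr 3
  field_simp
  ring

/-! ### Comparison with `P(j,k)` -/

/-- The main part of the twisted sum of Kloosterman sums attached to `P(j,k)`. -/
noncomputable def mainSum (ψ : AddChar F ℂ) (φ : MulChar F ℂ) (a j k : F) : ℂ :=
  ∑ y : F, φ y * kloo ψ a 1 (((j + k) ^ 2 - y) * ((j - k) ^ 2 + y))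

/-- When `j k = 0` the change of variables degenerates to the bijection `y = i z`. -/
lemma sum_kloo_of_mul_eq_zero {ψ : AddChar F ℂ} (hψ : ψ ≠ 1) {a : F} (ha : a ≠ 0)
    (hφ2 : φ ^ 2 = 1) {i : F} (hi : i * i = -1) {j k : F} (hjk : j * k = 0) :
    ∑ z : Fˣ, φ z * kloo ψ a (z + k ^ 4 / z) (z + j ^ 4 / z) =
      φ i * mainSum ψ φ a j k := by
  have hi0 : i ≠ 0 := by rintro rfl; simp at hi
  rw [mainSum, sum_eq_zero_add_units (fun y : F => φ y * _), MulChar.map_zero, zero_mul, zero_add, Finset.mul_sum]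
  refine Fintype.sum_equiv (Equiv.mulLeft (Units.mk0 i hi0)) _ _ (fun z => ?_)
  have hz := z.ne_zero
  rw [kloo_eq hψ ha, if_neg, add_zero]
  · simp only [Equiv.coe_mulLeft, Units.val_mul, Units.val_mk0]
    rw [map_mul, ← mul_assoc, ← mul_assoc, quad_sq hφ2 hi0, one_mul]
    congr 2
    field_simp
    linear_combination (j ^ 3 * k ^ 3 + 2 * j * k * z ^ 2 - 4 * i * z ^ 3) * hjk + z ^ 4 * hi
  · rintro ⟨h1, h2⟩
    rcases mul_eq_zero.1 hjk with h | h
    · rw [h] at h2; simp at h2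
    · rw [h] at h1; simp at h1

/-- When `j k ≠ 0` the change of variables is two-to-one, and the correction terms of `kloo_eq`
come from `z = ± i k²`. -/
lemma sum_kloo_of_mul_ne_zero (hc : ringChar F ≠ 2) {ψ : AddChar F ℂ} (hψ : ψ ≠ 1) {a : F}
    (ha : a ≠ 0) (hφ2 : φ ^ 2 = 1) (hφ1 : φ ≠ 1) {i : F} (hi : i * i = -1) {j k : F}
    (hj : j ≠ 0) (hk : k ≠ 0) :
    ∑ z : Fˣ, φ z * kloo ψ a (z + k ^ 4 / z) (z + j ^ 4 / z) =
      2 * φ i * (mainSum ψ φ a j k + if j ^ 4 = k ^ 4 then (Fintype.card F : ℂ) else 0) := by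
  have h2 : (2 : F) ≠ 0 := Ring.two_ne_zero hc
  have hi0 : i ≠ 0 := by rintro rfl; simp at hi
  have hm1 : φ (-1) = 1 := by rw [← hi, map_mul, quad_sq hφ2 hi0]
  have hsplit : ∀ z : Fˣ, φ z * kloo ψ a (z + k ^ 4 / z) (z + j ^ 4 / z) =
      φ z * kloo ψ a 1 ((z + k ^ 4 / z) * (z + j ^ 4 / z)) +
      φ z * if (z : F) + k ^ 4 / z = 0 ∧ (z : F) + j ^ 4 / z = 0 then
        (Fintype.card F : ℂ) else 0 := fun z => by rw [kloo_eq hψ ha, mul_add]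
  rw [Finset.sum_congr rfl (fun z _ => hsplit z), Finset.sum_add_distrib, mul_add]
  congr 1
  · have h := twisted_even_sum hc hφ2 hφ1 hi (mul_ne_zero hj hk)
      (fun w => kloo ψ a 1 ((j ^ 2 + k ^ 2) ^ 2 - w ^ 2)) (fun w => by simp)
    rw [mainSum]
    convert h using 3 with z _ y
    · congr 2
      have := z.ne_zero
      field_simp
      linear_combination (z ^ 2 - (j * k) ^ 2) ^ 2 * hi
    · congr 2; ring
  · by_cases hjk : j ^ 4 = k ^ 4
    · rw [if_pos hjk]
      have h0 : i * k ^ 2 ≠ 0 := mul_ne_zero hi0 (pow_ne_zero 2 hk)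
      have hne : Units.mk0 _ h0 ≠ -Units.mk0 _ h0 := by
        intro h
        have h := congrArg Units.val h
        simp only [Units.val_neg, Units.val_mk0] at h
        exact mul_ne_zero h2 h0 (by linear_combination h)
      have hk1 : φ (i * k ^ 2) = φ i := by
        rw [map_mul, map_pow, pow_two, quad_sq hφ2 hk, mul_one]
      rw [← Finset.sum_subset (Finset.subset_univ {Units.mk0 _ h0, -Units.mk0 _ h0}),
        Finset.sum_pair hne]
      · have hv : ∀ s : F, s = i * k ^ 2 ∨ s = - (i * k ^ 2) → s + k ^ 4 / s = 0 := by
          intro s hs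
          have hs0 : s ≠ 0 := by
            rcases hs with rfl | rfl
            · exact h0
            · exact neg_ne_zero.2 h0
          field_simp
          rcases hs with rfl | rfl <;> linear_combination k ^ 4 * hi
        simp only [Units.val_neg, Units.val_mk0, hjk]
        rw [if_pos ⟨hv _ (Or.inl rfl), hv _ (Or.inl rfl)⟩,
          if_pos ⟨hv _ (Or.inr rfl), hv _ (Or.inr rfl)⟩, neg_eq_neg_one_mul, map_mul φ (-1) _, hm1, hk1]
        ring
      · intro z _ hz
        rw [if_neg, mul_zero]
        rintro ⟨h, -⟩
        apply hz
        have hz0 := z.ne_zero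
        field_simp at h
        have h3 : ((z : F) - i * k ^ 2) * (z + i * k ^ 2) = 0 := by
          linear_combination h - k ^ 4 * hi
        simp only [Finset.mem_insert, Finset.mem_singleton, Units.ext_iff, Units.val_neg,
          Units.val_mk0]
        rcases mul_eq_zero.1 h3 with h | h
        · left; linear_combination h
        · right; linear_combination h
    · rw [if_neg hjk, mul_zero]
      refine Finset.sum_eq_zero fun z _ => ?_
      rw [if_neg, mul_zero]
      rintro ⟨h3, h4⟩
      have := z.ne_zero
      field_simp at h3 h4
      exact hjk (by linear_combination h4 - h3)

lemma Pkatz_eq {ψ : AddChar F ℂ} (hψ : ψ ≠ 1) {χ : MulChar F ℂ} (hχ4 : χ ^ 4 = 1)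
    (hχ2 : χ ^ 2 ≠ 1) {a : F} (ha : a ≠ 0) {i : F} (hi : i * i = -1) (j k : F) :
    Fintype.card F * Pkatz ψ χ a j k =
      mainSum ψ (χ ^ 2) a j k + Fintype.card F * ((if j = k then 1 else 0) +
        (if j = -k then 1 else 0) +
        if (j + k) ^ 2 + (j - k) ^ 2 = 0 then (χ ^ 2) ((j + k) ^ 2) else 0) := by
  have hφ2 : (χ ^ 2) ^ 2 = 1 := by rw [← pow_mul]; exact hχ4
  have hi0 : i ≠ 0 := by rintro rfl; simp at hi
  have hm1 : (χ ^ 2) (-1) = 1 := by rw [← hi, map_mul, quad_sq hφ2 hi0]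
  have hq0 : (Fintype.card F : ℂ) ≠ 0 := Nat.cast_ne_zero.2 Fintype.card_ne_zero
  have hG : gaussSum (χ ^ 2) ψ * gaussSum (χ ^ 2) ψ = Fintype.card F := by
    have h := gauss_mul_inv hψ hχ2
    have h2 : (χ ^ 2)⁻¹ = χ ^ 2 := by rw [inv_eq_iff_mul_eq_one, ← pow_two, hφ2]
    rwa [hm1, one_mul, h2] at h
  have hG0 : gaussSum (χ ^ 2) ψ ≠ 0 := fun h => hq0 (by rw [← hG, h, zero_mul])
  have hsum := gauss_mul_sum hφ2 hχ2 ψ a ((j + k) ^ 2) ((j - k) ^ 2)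
  have hcorr : ∑ y : F, (χ ^ 2) y * (if (j + k) ^ 2 - y = 0 ∧ (j - k) ^ 2 + y = 0 then
      (Fintype.card F : ℂ) else 0) = Fintype.card F *
        if (j + k) ^ 2 + (j - k) ^ 2 = 0 then (χ ^ 2) ((j + k) ^ 2) else 0 := by
    rw [Finset.sum_eq_single ((j + k) ^ 2)]
    · simp only [sub_self, true_and, add_comm ((j - k) ^ 2)]
      split_ifs <;> ring
    · intro y _ hy
      rw [if_neg, mul_zero]
      rintro ⟨h, -⟩
      exact hy (by linear_combination -h)
    · simp
  have hinv : (gaussSum (χ ^ 2) ψ)⁻¹ * Fintype.card F = gaussSum (χ ^ 2) ψ := by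
    rw [← hG]; field_simp
  have hsplit : ∀ y : F, (χ ^ 2) y * kloo ψ a ((j + k) ^ 2 - y) ((j - k) ^ 2 + y) =
      (χ ^ 2) y * kloo ψ a 1 (((j + k) ^ 2 - y) * ((j - k) ^ 2 + y)) +
      (χ ^ 2) y * if (j + k) ^ 2 - y = 0 ∧ (j - k) ^ 2 + y = 0 then
        (Fintype.card F : ℂ) else 0 := fun y => by rw [kloo_eq hψ ha, mul_add]
  rw [Finset.sum_congr rfl (fun y _ => hsplit y), Finset.sum_add_distrib, hcorr] at hsum
  rw [Pkatz, sum_ne_zero_eq_units (fun x : F =>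
    (χ ^ 2) (a / x - x) * ψ (x * (j + k) ^ 2 + (a / x) * (j - k) ^ 2)), hm1, mainSum]
  linear_combination hsum + (∑ x : Fˣ, (χ ^ 2) (a / x - x) *
    ψ (x * (j + k) ^ 2 + (a / x) * (j - k) ^ 2)) * hinv

lemma Vkatz_of_ne_zero (ψ : AddChar F ℂ) (χ : MulChar F ℂ) (a : F) (τ : ℂ) {j : F}
    (hj : j ≠ 0) : Vkatz ψ χ a τ j = τ⁻¹ * twKloo ψ χ (a * j ^ 4) := by
  rw [Vkatz, if_neg hj, sum_ne_zero_eq_units (fun x : F => χ x * ψ (x + a * j ^ 4 / x)), twKloo]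

end Helpers

/-- Katz's mixed character sum identity `P(j,k) = V(j)·V(k)` for `q ≡ 1 (mod 4)`. -/
theorem katz_identity
    (F : Type) [Field F] [Fintype F] [DecidableEq F]
    (hq : Fintype.card F % 4 = 1)
    (ψ : AddChar F ℂ) (hψ : ψ ≠ 1)
    (A₄ : MulChar F ℂ) (hA₄ : orderOf A₄ = 4)
    (a : F) (ha : a ≠ 0)
    (τ : ℂ) (hτ : τ ^ 2 = (Fintype.card F : ℂ) * A₄ (-a)) :
    ∀ j k : F, Pkatz ψ A₄ a j k = Vkatz ψ A₄ a τ j * Vkatz ψ A₄ a τ k := by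
  intro j k
  have hc : ringChar F ≠ 2 := fun h => by
    have := FiniteField.even_card_iff_char_two.1 h
    omega
  have h2 : (2 : F) ≠ 0 := Ring.two_ne_zero hc
  obtain ⟨i, hi⟩ : IsSquare (-1 : F) := FiniteField.isSquare_neg_one_iff.2 (by omega)
  have hi : i * i = -1 := hi.symm
  have hi0 : i ≠ 0 := by rintro rfl; simp at hi
  have hχ4 : A₄ ^ 4 = 1 := by rw [← hA₄]; exact pow_orderOf_eq_one A₄
  have hχ2 : A₄ ^ 2 ≠ 1 := fun h => by
    have := orderOf_dvd_of_pow_eq_one h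
    rw [hA₄] at this
    omega
  have hχ1 : A₄ ≠ 1 := fun h => hχ2 (by rw [h, one_pow])
  have hφ2 : (A₄ ^ 2) ^ 2 = 1 := by rw [← pow_mul]; exact hχ4
  have hq0 : (Fintype.card F : ℂ) ≠ 0 := Nat.cast_ne_zero.2 Fintype.card_ne_zero
  have hm1 : A₄ (-1) = (A₄ ^ 2) i := by
    rw [← hi, map_mul, MulChar.pow_apply' _ two_ne_zero, pow_two]
  have hφi := quad_sq hφ2 hi0
  have hma : A₄ (-a) = (A₄ ^ 2) i * A₄ a := by rw [neg_eq_neg_one_mul, map_mul, hm1]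
  have hτ' : τ * τ = Fintype.card F * ((A₄ ^ 2) i * A₄ a) := by rw [← pow_two, hτ, hma]
  have hχa : A₄ a ≠ 0 := (ha.isUnit.map A₄).ne_zero
  have hτ0 : τ ≠ 0 := fun h => by
    rw [h, zero_mul] at hτ'
    exact mul_ne_zero hq0 (mul_ne_zero (left_ne_zero_of_mul_eq_one hφi) hχa) hτ'.symm
  have hGG := gauss_mul_inv hψ hχ1
  rw [hm1] at hGG
  have hG0 : gaussSum A₄ ψ ≠ 0 := left_ne_zero_of_mul (hGG.trans_ne
    (mul_ne_zero (left_ne_zero_of_mul_eq_one hφi) hq0))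
  -- `τ V(0)` splits as the sum of the two halves of the symmetrised product.
  have hV0 : Vkatz ψ A₄ a τ 0 =
      τ⁻¹ * (twKloo ψ A₄ (a * 0 ^ 4) + A₄ a * twKloo ψ A₄⁻¹ (a * 0 ^ 4)) := by
    rw [Vkatz, if_pos rfl, zero_pow four_ne_zero, mul_zero, twKloo_zero, twKloo_zero]
    field_simp
    linear_combination hτ' - A₄ a * hGG
  -- For `j ≠ 0` both halves coincide.
  have hflip : ∀ {j : F}, j ≠ 0 →
      A₄ a * twKloo ψ A₄⁻¹ (a * j ^ 4) = twKloo ψ A₄ (a * j ^ 4) := by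
    intro j hj
    have h4 : A₄ (a * j ^ 4) = A₄ a := by
      rw [map_mul, map_pow, ← MulChar.pow_apply' _ four_ne_zero, hχ4,
        MulChar.one_apply hj.isUnit, mul_one]
    rw [twKloo_flip ψ A₄ (mul_ne_zero ha (pow_ne_zero 4 hj)), h4]
  have hprod := product_formula hc ψ hχ4 hχ2 ha (j ^ 4) (k ^ 4)
  have hP := Pkatz_eq hψ hχ4 hχ2 ha hi j k
  -- It suffices to compare after multiplication by `τ² = q A₄(-a)`.
  suffices h : (A₄ ^ 2) i * A₄ a * (Fintype.card F * Pkatz ψ A₄ a j k) =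
      (τ * Vkatz ψ A₄ a τ j) * (τ * Vkatz ψ A₄ a τ k) by
    refine mul_left_cancel₀ (mul_ne_zero hτ0 hτ0) ?_
    linear_combination h + Pkatz ψ A₄ a j k * hτ'
  rw [hP]
  by_cases hj : j = 0
  · have hS := sum_kloo_of_mul_eq_zero hψ ha hφ2 hi (j := j) (k := k) (by rw [hj, zero_mul])
    rw [hS] at hprod
    subst hj
    by_cases hk : k = 0
    · subst hk
      rw [hV0, mul_inv_cancel_left₀ hτ0]
      have hGG' : twKloo ψ A₄ (a * 0 ^ 4) * twKloo ψ A₄⁻¹ (a * 0 ^ 4) =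
          (A₄ ^ 2) i * Fintype.card F := by
        rw [zero_pow four_ne_zero, mul_zero, twKloo_zero, twKloo_zero, hGG]
      simp only [neg_zero, if_true, add_zero, sub_zero, zero_pow two_ne_zero, MulChar.map_zero]
      linear_combination -hprod - 2 * A₄ a * hGG'
    · rw [hV0, Vkatz_of_ne_zero ψ A₄ a τ hk, mul_inv_cancel_left₀ hτ0, mul_inv_cancel_left₀ hτ0,
        if_neg (Ne.symm hk), if_neg (fun h => hk (neg_eq_zero.1 h.symm)), if_neg]
      · rw [hflip hk] at hprod
        linear_combination -hprod
      · intro h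
        exact mul_ne_zero h2 (pow_ne_zero 2 hk) (by linear_combination h)
  · by_cases hk : k = 0
    · have hS := sum_kloo_of_mul_eq_zero hψ ha hφ2 hi (j := j) (k := k) (by rw [hk, mul_zero])
      rw [hS] at hprod
      subst hk
      rw [hV0, Vkatz_of_ne_zero ψ A₄ a τ hj, mul_inv_cancel_left₀ hτ0, mul_inv_cancel_left₀ hτ0,
        if_neg hj, neg_zero, if_neg hj, if_neg]
      · rw [hflip hj] at hprod
        linear_combination -hprod
      · intro h
        exact mul_ne_zero h2 (pow_ne_zero 2 hj) (by linear_combination h)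
    · have hS := sum_kloo_of_mul_ne_zero hc hψ ha hφ2 hχ2 hi hj hk
      rw [hS, hflip hj, hflip hk] at hprod
      rw [Vkatz_of_ne_zero ψ A₄ a τ hj, Vkatz_of_ne_zero ψ A₄ a τ hk, mul_inv_cancel_left₀ hτ0,
        mul_inv_cancel_left₀ hτ0]
      -- `j⁴ = k⁴` holds in exactly one of the ways `j = k`, `j = -k`, `j² = -k²`.
      have hδ : ((if j = k then 1 else 0) + (if j = -k then 1 else 0) +
          if (j + k) ^ 2 + (j - k) ^ 2 = 0 then (A₄ ^ 2) ((j + k) ^ 2) else 0 : ℂ) =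
          if j ^ 4 = k ^ 4 then 1 else 0 := by
        have hkk : k ≠ -k := fun h => mul_ne_zero h2 hk (by linear_combination h)
        have h4 : (2 * (2 * k ^ 2) : F) ≠ 0 :=
          mul_ne_zero h2 (mul_ne_zero h2 (pow_ne_zero 2 hk))
        by_cases h3 : (j + k) ^ 2 + (j - k) ^ 2 = 0
        · have e : j ^ 2 + k ^ 2 = 0 := mul_left_cancel₀ h2 (by linear_combination h3)
          have n1 : j ≠ k := by
            rintro rfl; exact h4 (by linear_combination 2 * e)
          have n2 : j ≠ -k := by
            rintro rfl; exact h4 (by linear_combination 2 * e)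
          have n3 : j + k ≠ 0 := fun h => n2 (by linear_combination h)
          rw [if_neg n1, if_neg n2, if_pos h3,
            if_pos (by linear_combination (j ^ 2 - k ^ 2) * e), map_pow, pow_two, quad_sq hφ2 n3]
          ring
        · rw [if_neg h3]
          by_cases h5 : j = k
          · subst h5; simp [hkk]
          · by_cases h6 : j = -k
            · rw [if_neg h5, if_pos h6, if_pos (by rw [h6]; ring)]; ring
            · rw [if_neg h5, if_neg h6, if_neg]
              · ring
              · intro h
                have : ((j + k) ^ 2 + (j - k) ^ 2) * ((j - k) * (j + k)) = 0 := by
                  linear_combination 2 * h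
                rcases mul_eq_zero.1 this with h | h
                · exact h3 h
                · rcases mul_eq_zero.1 h with h | h
                  · exact h5 (by linear_combination h)
                  · exact h6 (by linear_combination h)
      have hq' : (if j ^ 4 = k ^ 4 then (Fintype.card F : ℂ) else 0) =
          Fintype.card F * if j ^ 4 = k ^ 4 then 1 else 0 := by split_ifs <;> ring
      rw [hq'] at hprod
      rw [hδ]
      linear_combination (-1 / 2 : ℂ) * hprod
end

section
/- If the multiplicative character χ of F_q is not a fourth power (i.e., there is no multiplicative character ν with χ = ν⁴), then S(χ) = 0. -/
/-!
A character `χ` that is trivial on all fourth roots of unity is a fourth power: both `Fˣ` and its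
character group are cyclic of order `q - 1 = 4m`, so with `g` a generator of `Fˣ`, `χ (g ^ m) = 1`
forces `χ ^ m = 1`, and the elements of exponent dividing `m` in a cyclic group of order `4m` are
exactly the fourth powers. Hence a `χ` that is not a fourth power satisfies `χ u ≠ 1` for some `u`
with `u ^ 4 = 1`. Since `V(j)` depends only on `j ^ 4`, the substitution `j ↦ u j` gives
`S(χ) = χ(u) S(χ)`, so `S(χ) = 0`.
-/

open Finset

theorem exists_eq_pow_four_of_pow_eq_one {G : Type*} [Group G] [Finite G] [IsCyclic G] {m : ℕ}
    (hm : 0 < m) (hG : Nat.card G = 4 * m) (x : G) (hx : x ^ m = 1) : ∃ y : G, x = y ^ 4 := by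
  obtain ⟨e, he⟩ := IsCyclic.exists_generator (α := G)
  obtain ⟨k, rfl⟩ := (mem_powers_iff_mem_zpowers).2 (he x)
  have ho : orderOf e = 4 * m := by rw [orderOf_eq_card_of_forall_mem_zpowers he, hG]
  have hd : orderOf e ∣ k * m := orderOf_dvd_of_pow_eq_one (by rw [pow_mul]; exact hx)
  rw [ho] at hd
  obtain ⟨l, rfl⟩ := Nat.dvd_of_mul_dvd_mul_right hm hd
  exact ⟨e ^ l, by simp only [← pow_mul, mul_comm]⟩

theorem exists_fourth_root_apply_ne_one (F : Type) [Field F] [Fintype F]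
    (hq : Fintype.card F % 4 = 1) (χ : MulChar F ℂ) (hχ : ∀ ν : MulChar F ℂ, χ ≠ ν ^ 4) :
    ∃ u : Fˣ, u ^ 4 = 1 ∧ χ u ≠ 1 := by
  classical
  have hcard : Nat.card Fˣ = 4 * (Fintype.card F / 4) := by
    rw [Nat.card_eq_fintype_card, Fintype.card_units]; omega
  have hm : 0 < Fintype.card F / 4 := by
    have := Fintype.one_lt_card (α := F); omega
  obtain ⟨f⟩ := MulChar.mulEquiv_units F ℂ
  have : IsCyclic (MulChar F ℂ) := isCyclic_of_surjective f.symm f.symm.surjective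
  obtain ⟨g, hg⟩ := IsCyclic.exists_generator (α := Fˣ)
  refine ⟨g ^ (Fintype.card F / 4), ?_, fun h => ?_⟩
  · rw [← pow_mul, mul_comm, ← hcard, pow_card_eq_one']
  · have h1 : χ ^ (Fintype.card F / 4) = 1 := by
      rw [MulChar.eq_iff hg, MulChar.pow_apply_coe, MulChar.one_apply_coe, ← map_pow]
      exact_mod_cast h
    obtain ⟨ν, hν⟩ := exists_eq_pow_four_of_pow_eq_one hm
      ((Nat.card_congr f.toEquiv).trans hcard) χ h1
    exact hχ ν hν

/-- If `χ` is not a fourth power, then `S(χ) = 0`. -/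
theorem S_eq_zero_of_not_fourth_power
    (F : Type) [Field F] [Fintype F] [DecidableEq F]
    (hq : Fintype.card F % 4 = 1)
    (ψ : AddChar F ℂ) (hψ : ψ ≠ 1)
    (A₄ : MulChar F ℂ) (hA₄ : orderOf A₄ = 4)
    (a : F) (ha : a ≠ 0)
    (τ : ℂ) (hτ : τ ^ 2 = (Fintype.card F : ℂ) * A₄ (-a))
    (χ : MulChar F ℂ) (hχ : ∀ ν : MulChar F ℂ, χ ≠ ν ^ 4) :
    Smel ψ A₄ a τ χ = 0 := by
  obtain ⟨u, hu, hne⟩ := exists_fourth_root_apply_ne_one F hq χ hχ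
  have hu4 : (u : F) ^ 4 = 1 := by
    rw [← Units.val_pow_eq_pow_val, hu, Units.val_one]
  have hV (j : F) : Vkatz ψ A₄ a τ (u * j) = Vkatz ψ A₄ a τ j := by
    simp [Vkatz, mul_pow, hu4]
  have key : Smel ψ A₄ a τ χ = χ u * Smel ψ A₄ a τ χ := by
    conv_lhs => rw [Smel]
    rw [Smel, Finset.mul_sum]
    symm
    refine Finset.sum_equiv u.mulLeft (fun j => by simp) (fun j _ => ?_)
    simp only [Units.mulLeft_apply, hV, map_mul, mul_assoc]
  have h0 : (χ u - 1) * Smel ψ A₄ a τ χ = 0 := by linear_combination -key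
  exact (mul_eq_zero.1 h0).resolve_left (sub_ne_zero.2 hne)
end

section
/- If ν is a multiplicative character of F_q and χ = ν⁴, then S(χ) = τ^{−1} · ν̄(a) · Σ_{m=0}^{3} A₄^{1−m}(a) · G(νA₄^{m−1}) · G(νA₄^{m}), where character powers A₄^{n} for negative n are interpreted via A₄^{−1} = A̅₄ (the inverse/conjugate character). -/
/-!
Writing `S(ν⁴)` as a sum over `j ≠ 0` of a function of `j⁴`, the number `∑ₘ A₄ᵐ(t)` of fourth
roots of `t` (`card_fourth_roots`, which uses `4 ∣ q - 1`) turns it into four sums over `t ≠ 0`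
(`sum_fourth_power`). Each of them is the Mellin transform of a twisted Kloosterman sum at the
character `ν A₄ᵐ`, and the substitution `t = x y / a` factors it into
`(ν A₄ᵐ)⁻¹(a) G(ν A₄ᵐ) G(ν A₄ᵐ⁺¹)` (`sum_kloosterman`). Shifting `m` by one modulo `4` gives the
stated form.
-/

open Finset

/-- The number of fourth roots of `t ≠ 0` in `F` is `∑ₘ Aᵐ(t)`, for a character `A` of order `4`. -/
lemma card_fourth_roots {F : Type} [Field F] [Fintype F] [DecidableEq F]
    (hq : Fintype.card F % 4 = 1) (A : MulChar F ℂ) (hA : orderOf A = 4) (t : F) (ht : t ≠ 0) :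
    ((univ.filter (fun j : F => j ^ 4 = t)).card : ℂ) = ∑ m ∈ Finset.range 4, (A t) ^ m := by
  obtain ⟨g, hg⟩ := IsCyclic.exists_generator (α := Fˣ)
  have hcard : orderOf g = Fintype.card F - 1 := by
    rw [orderOf_eq_card_of_forall_mem_zpowers hg, Nat.card_eq_fintype_card, Fintype.card_units]
  have hpos : 1 < Fintype.card F := Fintype.one_lt_card
  obtain ⟨d, hd⟩ : ∃ d, Fintype.card F - 1 = 4 * d := ⟨(Fintype.card F - 1) / 4, by omega⟩
  have hprim : IsPrimitiveRoot ((g : F) ^ d) 4 := by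
    have h1 : IsPrimitiveRoot (g : F) (Fintype.card F - 1) := by
      rw [← hcard]
      exact IsPrimitiveRoot.coe_units_iff.mpr (IsPrimitiveRoot.orderOf g)
    exact h1.pow (by omega) (by rw [hd, mul_comm])
  have hroots : univ.filter (fun j : F => j ^ 4 = t) = (Polynomial.nthRoots 4 t).toFinset := by
    ext j
    simp [Polynomial.mem_nthRoots]
  have hA4 : ∀ u : Fˣ, A u ^ 4 = 1 := by
    intro u
    rw [← MulChar.pow_apply_coe, ← hA, pow_orderOf_eq_one, MulChar.one_apply_coe]
  rw [hroots, Multiset.toFinset_card_of_nodup (hprim.nthRoots_nodup ht), hprim.card_nthRoots]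
  split_ifs with h
  · obtain ⟨s, rfl⟩ := h
    have hs : s ≠ 0 := by rintro rfl; simp at ht
    have := hA4 (Units.mk0 s hs)
    simp only [Units.val_mk0] at this
    simp [map_pow, this]
  · have hne : A t ≠ 1 := by
      intro h1
      obtain ⟨k, hk⟩ := Subgroup.mem_zpowers_iff.mp (hg (Units.mk0 t ht))
      -- `A t = 1` forces `A ^ k = 1`, because a character is determined by its value at `g`.
      have hord : (4 : ℤ) ∣ k := by
        have hAk : A ^ k = 1 := by
          rw [MulChar.eq_iff hg, MulChar.one_apply_coe]
          have h2 : A.toUnitHom (g ^ k) = 1 := by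
            rw [hk]; ext; simpa [MulChar.coe_toUnitHom] using h1
          have h3 : (A ^ k).toUnitHom g = (A.toUnitHom g) ^ k := by
            have : MulChar.mulEquivToUnitHom (A ^ k) = (MulChar.mulEquivToUnitHom A) ^ k :=
              map_zpow _ _ _
            exact DFunLike.congr_fun this g
          rw [map_zpow] at h2
          rw [← MulChar.coe_toUnitHom, h3, h2, Units.val_one]
        have := orderOf_dvd_iff_zpow_eq_one.mpr hAk
        rwa [hA] at this
      obtain ⟨l, rfl⟩ := hord
      refine h ⟨((g ^ l : Fˣ) : F), ?_⟩
      rw [← Units.val_pow_eq_pow_val, ← zpow_natCast, ← zpow_mul, mul_comm]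
      exact congrArg Units.val hk
    have h4 := hA4 (Units.mk0 t ht)
    simp only [Units.val_mk0] at h4
    rw [geom_sum_eq hne, h4]
    simp

/-- Summing over `j ≠ 0` a function of `j⁴`: the substitution `t = j⁴`. -/
lemma sum_fourth_power {F : Type} [Field F] [Fintype F] [DecidableEq F]
    (hq : Fintype.card F % 4 = 1) (A : MulChar F ℂ) (hA : orderOf A = 4) (f : F → ℂ) :
    ∑ j ∈ univ.filter (fun j : F => j ≠ 0), f (j ^ 4) =
      ∑ m ∈ Finset.range 4, ∑ t ∈ univ.filter (fun t : F => t ≠ 0), (A t) ^ m * f t := by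
  rw [Finset.sum_comm]
  simp_rw [← Finset.sum_mul]
  rw [← Finset.sum_fiberwise_of_maps_to (s := univ.filter (fun j : F => j ≠ 0))
    (t := univ.filter (fun j : F => j ≠ 0)) (g := fun j => j ^ 4) (by simp)]
  refine Finset.sum_congr rfl fun t ht => ?_
  have ht0 : t ≠ 0 := by simpa using ht
  rw [← card_fourth_roots hq A hA t ht0]
  have hset : (univ.filter (fun j : F => j ≠ 0)).filter (fun j => j ^ 4 = t) =
      univ.filter (fun j : F => j ^ 4 = t) := by
    ext j
    simp only [Finset.mem_filter, Finset.mem_univ, true_and, and_iff_right_iff_imp]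
    rintro h rfl
    exact ht0 (by simpa using h.symm)
  rw [hset, Finset.sum_congr rfl (g := fun _ => f t) (by intro j hj; simp at hj; rw [hj]),
    Finset.sum_const, nsmul_eq_mul]

lemma gaussSum_eq_filter {F : Type} [Field F] [Fintype F] [DecidableEq F]
    (ψ : AddChar F ℂ) (B : MulChar F ℂ) :
    gaussSum B ψ = ∑ x ∈ univ.filter (fun x : F => x ≠ 0), B x * ψ x := by
  rw [gaussSum, Finset.sum_filter]
  refine Finset.sum_congr rfl fun x _ => ?_
  split_ifs with h
  · rfl
  · rw [not_not.mp h, MulChar.map_zero, zero_mul]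

/-- The Mellin transform of a twisted Kloosterman sum is a product of two Gauss sums, by the
substitution `t = x * y / a`. -/
lemma sum_kloosterman {F : Type} [Field F] [Fintype F] [DecidableEq F]
    (ψ : AddChar F ℂ) (A B : MulChar F ℂ) (a : F) (ha : a ≠ 0) :
    ∑ t ∈ univ.filter (fun t : F => t ≠ 0), B t *
        ∑ x ∈ univ.filter (fun x : F => x ≠ 0), A x * ψ (x + a * t / x) =
      B⁻¹ a * gaussSum B ψ * gaussSum (B * A) ψ := by
  simp_rw [Finset.mul_sum]
  rw [Finset.sum_comm, gaussSum_eq_filter ψ (B * A), Finset.mul_sum]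
  refine Finset.sum_congr rfl fun x hx => ?_
  have hx0 : x ≠ 0 := by simpa using hx
  rw [gaussSum_eq_filter, Finset.mul_sum, Finset.sum_mul]
  refine Finset.sum_bij' (fun t _ => a * t / x) (fun y _ => x * y / a) ?_ ?_ ?_ ?_ ?_
  · intro t ht; simp at ht ⊢; exact ⟨⟨ha, ht⟩, hx0⟩
  · intro t ht; simp at ht ⊢; exact ⟨⟨hx0, ht⟩, ha⟩
  · intro t _; field_simp
  · intro t _; field_simp
  · intro t _
    have hB : B t = B⁻¹ a * B (a * t / x) * B x := by
      rw [MulChar.inv_apply', ← map_mul, ← map_mul]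
      congr 1
      field_simp
    rw [hB, AddChar.map_add_eq_mul, MulChar.mul_apply]
    ring

/-- Evaluation of `S(ν⁴)` in terms of Gauss sums. -/
theorem S_eval_fourth_power
    (F : Type) [Field F] [Fintype F] [DecidableEq F]
    (hq : Fintype.card F % 4 = 1)
    (ψ : AddChar F ℂ) (hψ : ψ ≠ 1)
    (A₄ : MulChar F ℂ) (hA₄ : orderOf A₄ = 4)
    (a : F) (ha : a ≠ 0)
    (τ : ℂ) (hτ : τ ^ 2 = (Fintype.card F : ℂ) * A₄ (-a))
    (ν : MulChar F ℂ) :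
    Smel ψ A₄ a τ (ν ^ 4) =
      τ⁻¹ * ν⁻¹ a * ∑ m ∈ Finset.range 4,
        (A₄ ^ (1 - (m : ℤ))) a * gaussSum (ν * A₄ ^ ((m : ℤ) - 1)) ψ *
          gaussSum (ν * A₄ ^ (m : ℤ)) ψ := by
  have hS : Smel ψ A₄ a τ (ν ^ 4) =
      τ⁻¹ * ∑ m ∈ Finset.range 4, (ν * A₄ ^ m)⁻¹ a * gaussSum (ν * A₄ ^ m) ψ *
        gaussSum (ν * A₄ ^ m * A₄) ψ := by
    have h1 : Smel ψ A₄ a τ (ν ^ 4) = τ⁻¹ * ∑ j ∈ univ.filter (fun j : F => j ≠ 0),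
        (fun t => ν t * ∑ x ∈ univ.filter (fun x : F => x ≠ 0), A₄ x * ψ (x + a * t / x))
          (j ^ 4) := by
      rw [Smel, Finset.mul_sum]
      refine Finset.sum_congr rfl fun j hj => ?_
      have hj0 : j ≠ 0 := by simpa using hj
      rw [Vkatz, if_neg hj0, MulChar.pow_apply' _ (by norm_num)]
      simp only [map_pow]
      ring
    rw [h1, sum_fourth_power hq A₄ hA₄ (fun t => ν t *
      ∑ x ∈ univ.filter (fun x : F => x ≠ 0), A₄ x * ψ (x + a * t / x))]
    congr 1
    refine Finset.sum_congr rfl fun m _ => ?_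
    rw [← sum_kloosterman ψ A₄ (ν * A₄ ^ m) a ha]
    refine Finset.sum_congr rfl fun t ht => ?_
    have ht0 : t ≠ 0 := by simpa using ht
    have hp : (A₄ ^ m) t = A₄ t ^ m := MulChar.pow_apply_coe A₄ m (Units.mk0 t ht0)
    rw [MulChar.mul_apply, hp]
    ring
  have h4 : A₄ ^ 4 = 1 := by rw [← hA₄, pow_orderOf_eq_one]
  have h3 : A₄ ^ 3 = A₄⁻¹ := eq_inv_of_mul_eq_one_left (by rw [← pow_succ, h4])
  have hneg : A₄ ^ (-2 : ℤ) = (A₄ ^ 2)⁻¹ := by rw [zpow_neg]; rfl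
  rw [hS, mul_assoc]
  congr 1
  -- The summand of index `m` on the left is the one of index `m + 1` modulo `4` on the right.
  simp only [Finset.sum_range_succ, Finset.sum_range_zero, mul_inv, MulChar.mul_apply,
    mul_assoc ν, ← pow_succ]
  norm_num [h4, h3, hneg]
  ring
end

section
/- Let ν be a multiplicative character of F_q such that ν⁴ is nontrivial. Then ₂F₁(ν², νA₄; νA̅₄ | −1) = (A₄(−1)·G(νA₄)) / (q·G(φ)·G(ν²)) · ( G(ν)G(A₄) + G(νφ)G(A̅₄) ). -/
/-!
The value is an instance of the finite-field analogue of Kummer's theorem. Since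
`(νA₄)⁻¹ · νA₄⁻¹ = φ`, the sum defining `₂F₁` is `∑ y, νA₄(y) φ(y - 1) ν⁻²(1 + y)`. The involution
`y = (1 - t)/(1 + t)` turns its summand into `νA₄((1 - t²)/4) A₄(t²)`
(`sum_kummer_substitution`), a function of `t²`. As `u` has `1 + φ(u)` square roots
(`sum_comp_sq`), the sum equals `(νA₄)⁻¹(4) (J(A₄, νA₄) + J(A₄⁻¹, νA₄))`.

Writing the Jacobi sums through Gauss sums gives a common denominator `G(ν) G(νφ)`, which the
quadratic Hasse–Davenport relation `ν(4) G(ν) G(νφ) = G(φ) G(ν²)` (`hasseDavenport_two`) evaluates.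
What is left of the value at `4` is `A₄⁻¹(4)`, and this is `A₄(-1)` because `-4 = (1 + i)⁴`
with `i² = -1`.
-/

open Finset

section KummerAux

variable {F : Type} [Field F] [Fintype F] [DecidableEq F]

/-- A nontrivial complex character of order two is the quadratic character: a nonsquare on which
`χ` is not `1` differs from any other nonsquare by a square. -/
lemma mulChar_eq_quadraticChar {χ : MulChar F ℂ} (h1 : χ ≠ 1) (h2 : χ ^ 2 = 1) (a : F) :
    χ a = (quadraticChar F a : ℂ) := by
  have hsq : ∀ b : F, b ≠ 0 → χ b ^ 2 = 1 := fun b hb => by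
    have := congrArg (fun f : MulChar F ℂ => f b) h2
    simpa [MulChar.pow_apply' χ two_ne_zero, MulChar.one_apply, hb] using this
  have hone : ∀ b : F, b ≠ 0 → IsSquare b → χ b = 1 := by
    rintro _ hb ⟨c, rfl⟩
    rw [map_mul, ← pow_two]
    exact hsq c (by rintro rfl; simp at hb)
  by_cases ha : a = 0
  · subst ha; simp [MulChar.map_zero]
  by_cases hs : IsSquare a
  · rw [hone a ha hs, (quadraticChar_one_iff_isSquare ha).2 hs]; simp
  · have hqa := quadraticChar_neg_one_iff_not_isSquare.2 hs
    obtain ⟨x, hx⟩ : ∃ x : Fˣ, χ x ≠ 1 := (MulChar.ne_one_iff).1 h1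
    have hx0 : (x : F) ≠ 0 := x.ne_zero
    have hqx := quadraticChar_neg_one_iff_not_isSquare.2 (fun h => hx (hone x hx0 h))
    have hprod : χ (a * x) = 1 := by
      refine hone _ (mul_ne_zero ha hx0) ?_
      rw [← quadraticChar_one_iff_isSquare (mul_ne_zero ha hx0), map_mul, hqa, hqx]
      norm_num
    have hxv : χ x = -1 := (sq_eq_one_iff.1 (hsq x hx0)).resolve_left hx
    rw [map_mul, hxv] at hprod
    rw [hqa]
    push_cast
    linear_combination -hprod

lemma sum_comp_sq (hF : ringChar F ≠ 2) {χ : MulChar F ℂ} (h1 : χ ≠ 1) (h2 : χ ^ 2 = 1)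
    (f : F → ℂ) : ∑ t : F, f (t ^ 2) = ∑ u : F, (1 + χ u) * f u := by
  rw [← Finset.sum_fiberwise univ (fun t : F => t ^ 2) (fun t => f (t ^ 2))]
  refine Finset.sum_congr rfl fun u _ => ?_
  have hc : ((#{t : F | t ^ 2 = u} : ℕ) : ℂ) = 1 + χ u := by
    have := quadraticChar_card_sqrts hF u
    rw [mulChar_eq_quadraticChar h1 h2 u, add_comm]
    rw [Set.toFinset_ofPred] at this
    exact_mod_cast this
  rw [← hc, ← nsmul_eq_mul, ← Finset.sum_const]
  exact Finset.sum_congr rfl fun t ht => by rw [(Finset.mem_filter.1 ht).2]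

/-- The quadratic Hasse–Davenport relation. It compares `J(ν, ν)` with `J(φ, ν)` through the
substitution `x = (1 + t)/2`, under which `4 x (1 - x) = 1 - t²`. -/
lemma hasseDavenport_two (hF : ringChar F ≠ 2) {ψ : AddChar F ℂ} (hψ : ψ ≠ 1)
    {φ ν : MulChar F ℂ} (h1 : φ ≠ 1) (h2 : φ ^ 2 = 1) (hν : ν ^ 2 ≠ 1) :
    ν 4 * (gaussSum ν ψ * gaussSum (ν * φ) ψ) = gaussSum φ ψ * gaussSum (ν ^ 2) ψ := by
  have h20 : (2 : F) ≠ 0 := Ring.two_ne_zero hF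
  have hν1 : ν ≠ 1 := by rintro rfl; simp at hν
  have hφν : φ * ν ≠ 1 := fun h => hν (by
    have : (φ * ν) ^ 2 = 1 := by rw [h, one_pow]
    rwa [mul_pow, h2, one_mul] at this)
  have hJ : ν 4 * jacobiSum ν ν = jacobiSum φ ν := by
    have e : ν 4 * jacobiSum ν ν = ∑ t : F, ν (1 - t ^ 2) := by
      let e : F ≃ F := (Equiv.mulLeft₀ (2 : F) h20).trans (Equiv.subRight 1)
      rw [jacobiSum, Finset.mul_sum, ← Equiv.sum_comp e (fun t => ν (1 - t ^ 2))]
      refine Finset.sum_congr rfl fun x _ => ?_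
      rw [← map_mul, ← map_mul]
      congr 1
      simp [e]
      ring
    rw [e, sum_comp_sq hF h1 h2 (fun u => ν (1 - u))]
    simp only [add_mul, one_mul, Finset.sum_add_distrib]
    have h0 : ∑ x : F, ν (1 - x) = 0 :=
      (Equiv.sum_comp (Equiv.subLeft (1 : F)) (fun x => ν x)).trans
        (MulChar.sum_eq_zero_of_ne_one hν1)
    rw [h0, zero_add, jacobiSum]
  have a1 := jacobiSum_mul_nontrivial (χ := ν) (φ := ν) (by rwa [← pow_two]) ψ
  have a2 := jacobiSum_mul_nontrivial hφν ψ
  have hG : gaussSum ν ψ ≠ 0 := gaussSum_ne_zero_of_nontrivial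
    (by exact_mod_cast Fintype.card_ne_zero) hν1 (AddChar.IsPrimitive.of_ne_one hψ)
  rw [← pow_two] at a1
  rw [mul_comm φ ν] at a2
  apply mul_right_cancel₀ hG
  linear_combination (-ν 4 * gaussSum (ν * φ) ψ) * a1
    + gaussSum (ν * φ) ψ * gaussSum (ν ^ 2) ψ * hJ + gaussSum (ν ^ 2) ψ * a2

/-- The substitution `y = (1 - t)/(1 + t)` in the sum defining `₂F₁(ν², νA₄; νA₄⁻¹ | -1)`. -/
lemma sum_kummer_substitution (h20 : (2 : F) ≠ 0) {A ν : MulChar F ℂ} (hA : A ^ 4 = 1) :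
    (ν * A) 4 * ∑ y : F, (ν * A) y * (A ^ 2) (y - 1) * (ν ^ 2)⁻¹ (1 + y) =
      ∑ t : F, (ν * A) (1 - t ^ 2) * A (t ^ 2) := by
  -- At `t = -1` the convention `2 / 0 = 0` makes `-1` a fixed point, as needed for a bijection.
  have hinv : Function.Involutive (fun t : F => 2 / (1 + t) - 1) := by
    intro t
    by_cases ht : 1 + t = 0
    · simp [ht]; linear_combination -ht
    · have h : 1 + (2 / (1 + t) - 1) = 2 / (1 + t) := by ring
      simp only [h]
      field_simp
      ring
  rw [Finset.mul_sum, ← Equiv.sum_comp hinv.toPerm]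
  refine Finset.sum_congr rfl fun t _ => ?_
  simp only [Function.Involutive.coe_toPerm]
  by_cases ht : 1 + t = 0
  · have : 1 - t ^ 2 = 0 := by linear_combination (1 - t) * ht
    rw [this]
    simp [ht, MulChar.map_zero]
  have hw : (2 : F) / (1 + t) ≠ 0 := div_ne_zero h20 ht
  have hA4 : A ((2 / (1 + t)) ^ 4) = 1 := by
    have := congrArg (fun f : MulChar F ℂ => f (2 / (1 + t))) hA
    rw [map_pow]
    simpa only [MulChar.pow_apply' A four_ne_zero, MulChar.one_apply hw.isUnit] using this
  have e1 : (4 : F) * (2 / (1 + t) - 1) * ((2 / (1 + t))⁻¹) ^ 2 = 1 - t ^ 2 := by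
    field_simp
    ring
  have e2 : (4 : F) * (2 / (1 + t) - 1) * (2 / (1 + t) - 1 - 1) ^ 2
      = (1 - t ^ 2) * t ^ 2 * (2 / (1 + t)) ^ 4 := by
    field_simp
    ring
  have b1 := congrArg ν e1
  have b2 := congrArg A e2
  rw [map_mul, map_mul, map_mul A _ ((2 / (1 + t)) ^ 4), hA4, mul_one] at b2
  rw [map_mul, map_mul] at b1
  simp only [MulChar.mul_apply, MulChar.inv_apply', MulChar.pow_apply' _ two_ne_zero] at *
  rw [show 1 + (2 / (1 + t) - 1) = 2 / (1 + t) by ring]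
  simp only [map_mul, map_pow] at *
  rw [← b1]
  linear_combination (ν 4 * ν (2 / (1 + t) - 1) * ν (2 / (1 + t))⁻¹ ^ 2) * b2

/-- `-4` is a fourth power when `-1` is a square, so `A(4)` and `A(-1)` are mutually inverse. -/
lemma quartic_apply_four (hq : Fintype.card F % 4 = 1) (h20 : (2 : F) ≠ 0)
    {A : MulChar F ℂ} (hA : A ^ 4 = 1) : A 4 * A (-1) = 1 := by
  obtain ⟨i, hi⟩ := FiniteField.isSquare_neg_one_iff.2 (show Fintype.card F % 4 ≠ 3 by omega)
  have h4 : (4 : F) * (-1) = (1 + i) ^ 4 := by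
    linear_combination (i ^ 2 + 4 * i + 5) * hi
  have hne : 1 + i ≠ 0 := by
    intro h
    rw [h] at h4
    have : (2 : F) ^ 2 = 0 := by linear_combination -h4
    exact h20 (pow_eq_zero_iff two_ne_zero |>.1 this)
  rw [← map_mul, h4, map_pow]
  have := congrArg (fun f : MulChar F ℂ => f (1 + i)) hA
  simpa only [MulChar.pow_apply' A four_ne_zero, MulChar.one_apply hne.isUnit] using this

end KummerAux

/-- Value of `₂F₁(ν², νA₄; νA̅₄ | −1)` when `ν⁴` is nontrivial. -/
theorem hyp2F1_at_neg_one
    (F : Type) [Field F] [Fintype F] [DecidableEq F]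
    (hq : Fintype.card F % 4 = 1)
    (ψ : AddChar F ℂ) (hψ : ψ ≠ 1)
    (A₄ : MulChar F ℂ) (hA₄ : orderOf A₄ = 4)
    (ν : MulChar F ℂ) (hν : ν ^ 4 ≠ 1) :
    hyp2F1 (ν ^ 2) (ν * A₄) (ν * A₄⁻¹) (-1 : F) =
      A₄ (-1) * gaussSum (ν * A₄) ψ /
          ((Fintype.card F : ℂ) * gaussSum (A₄ ^ 2) ψ * gaussSum (ν ^ 2) ψ) *
        (gaussSum ν ψ * gaussSum A₄ ψ + gaussSum (ν * A₄ ^ 2) ψ * gaussSum A₄⁻¹ ψ) := by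
  have hF : ringChar F ≠ 2 := by
    intro h
    have := FiniteField.even_card_of_char_two h
    omega
  have h20 : (2 : F) ≠ 0 := Ring.two_ne_zero hF
  have hA4 : A₄ ^ 4 = 1 := hA₄ ▸ pow_orderOf_eq_one A₄
  have hφ1 : A₄ ^ 2 ≠ 1 := fun h => by
    have := orderOf_dvd_of_pow_eq_one h
    rw [hA₄] at this
    omega
  have hφ2 : (A₄ ^ 2) ^ 2 = 1 := by rw [← pow_mul]; exact hA4
  have hν2 : ν ^ 2 ≠ 1 := fun h => hν (by rw [show 4 = 2 * 2 from rfl, pow_mul, h, one_pow])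
  have hν1 : ν ≠ 1 := by rintro rfl; simp at hν
  have hνφ : ν * A₄ ^ 2 ≠ 1 := fun h => hν2 (by
    have : (ν * A₄ ^ 2) ^ 2 = 1 := by rw [h, one_pow]
    rwa [mul_pow, hφ2, mul_one] at this)
  have hinv : A₄⁻¹ = A₄ ^ 2 * A₄ := inv_eq_of_mul_eq_one_left (by
    rw [mul_assoc, ← pow_two, ← pow_add]; exact hA4)
  have hq0 : (Fintype.card F : ℂ) ≠ 0 := by exact_mod_cast Fintype.card_ne_zero
  have hGne : ∀ χ : MulChar F ℂ, χ ≠ 1 → gaussSum χ ψ ≠ 0 := fun χ h =>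
    gaussSum_ne_zero_of_nontrivial hq0 h (AddChar.IsPrimitive.of_ne_one hψ)
  have hchar : (ν * A₄)⁻¹ * (ν * A₄⁻¹) = A₄ ^ 2 := by
    have : A₄⁻¹ * A₄⁻¹ = A₄ ^ 2 := by
      rw [← mul_inv, ← pow_two]
      exact inv_eq_of_mul_eq_one_left (by rw [← pow_two]; exact hφ2)
    rw [mul_inv, mul_mul_mul_comm, inv_mul_cancel, one_mul, this]
  have hS : (ν * A₄) 4 * ∑ y : F, (ν * A₄) y * (A₄ ^ 2) (y - 1) * (ν ^ 2)⁻¹ (1 + y)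
      = jacobiSum A₄ (ν * A₄) + jacobiSum A₄⁻¹ (ν * A₄) := by
    rw [sum_kummer_substitution h20 hA4,
      sum_comp_sq hF hφ1 hφ2 (fun u => (ν * A₄) (1 - u) * A₄ u), jacobiSum, jacobiSum,
      ← Finset.sum_add_distrib]
    refine Finset.sum_congr rfl fun u _ => ?_
    rw [hinv, MulChar.mul_apply (A₄ ^ 2)]
    ring
  have hJ1 := jacobiSum_mul_nontrivial (χ := A₄) (φ := ν * A₄)
    (by rwa [show A₄ * (ν * A₄) = ν * A₄ ^ 2 by rw [pow_two]; ac_rfl]) ψ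
  have hJ2 := jacobiSum_mul_nontrivial (χ := A₄⁻¹) (φ := ν * A₄)
    (by rwa [mul_comm, mul_inv_cancel_right]) ψ
  rw [show A₄ * (ν * A₄) = ν * A₄ ^ 2 by rw [pow_two]; ac_rfl] at hJ1
  rw [mul_comm A₄⁻¹, mul_inv_cancel_right] at hJ2
  have hHD := hasseDavenport_two hF hψ hφ1 hφ2 hν2
  have h4 := quartic_apply_four hq h20 hA4
  have hN := hGne ν hν1
  have hNφ := hGne _ hνφ
  have hφ := hGne _ hφ1
  have hN2 := hGne _ hν2
  have hA40 : A₄ 4 ≠ 0 := left_ne_zero_of_mul_eq_one h4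
  have hε : (1 : MulChar F ℂ) (-1) = 1 := MulChar.one_apply (by simp)
  rw [hyp2F1, hchar, hε]
  simp only [neg_mul, one_mul, sub_neg_eq_add]
  generalize (∑ y : F, (ν * A₄) y * (A₄ ^ 2) (y - 1) * (ν ^ 2)⁻¹ (1 + y)) = S at hS ⊢
  rw [MulChar.mul_apply] at hS
  rw [div_mul_eq_mul_div, div_mul_eq_mul_div, div_eq_div_iff hq0
    (mul_ne_zero (mul_ne_zero hq0 hφ) hN2)]
  apply mul_right_cancel₀ hA40
  -- Clear denominators: `φ`- and `ν²`-Gauss sums are traded for `ν(4) G(ν) G(νφ)`.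
  linear_combination (-(Fintype.card F : ℂ) * S * A₄ 4) * hHD
    + (Fintype.card F : ℂ) * gaussSum ν ψ * gaussSum (ν * A₄ ^ 2) ψ * hS
    + (Fintype.card F : ℂ) * gaussSum ν ψ * hJ1
    + (Fintype.card F : ℂ) * gaussSum (ν * A₄ ^ 2) ψ * hJ2
    - (Fintype.card F : ℂ) * gaussSum (ν * A₄) ψ * (gaussSum ν ψ * gaussSum A₄ ψ
      + gaussSum (ν * A₄ ^ 2) ψ * gaussSum A₄⁻¹ ψ) * h4
end

section
/- If the multiplicative character χ of F_q is not a fourth power (i.e., there is no multiplicative character ν with χ = ν⁴), then T(χ) = 0. -/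
/-!
Let `i = g ^ ((q - 1) / 4)` for a generator `g` of `Fˣ`, so `i ^ 2 = -1`. Replacing `j` by `i * j`
changes the sign of `j ^ 2`, which the substitution `x ↦ -x` in the sum defining `P(j, 0)` undoes,
because `φ(-1) = 1`. Hence `P(i * j, 0) = P(j, 0)` (`Pkatz_mul_zero`), and reindexing the Mellin
transform gives `T(χ) = χ(i) T(χ)`. If `T(χ) ≠ 0` then `χ(i) = 1`; choosing a complex fourth root
`z` of `χ(g)`, one has `z ^ (q - 1) = χ(i) = 1`, so `g ↦ z` defines a character whose fourth power
is `χ` (`exists_fourth_root`).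
-/

open Finset

/-- If `χ` is trivial on `g ^ m`, where `g` generates the units and `4 * m = q - 1`, then `χ` is a
fourth power. -/
lemma exists_fourth_root {F : Type} [Field F] [Fintype F] [DecidableEq F]
    (χ : MulChar F ℂ) {g : Fˣ} (hg : ∀ x, x ∈ Subgroup.zpowers g) {m : ℕ}
    (hm : Fintype.card Fˣ = 4 * m) (h : χ ((g ^ m : Fˣ) : F) = 1) :
    ∃ ν : MulChar F ℂ, χ = ν ^ 4 := by
  obtain ⟨z, hz⟩ := IsAlgClosed.exists_pow_nat_eq (χ (g : F)) (n := 4) (by norm_num)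
  have hχg : χ (g : F) ≠ 0 := (g.isUnit.map χ).ne_zero
  have hz0 : z ≠ 0 := by
    rintro rfl
    exact hχg (by rw [← hz]; norm_num)
  have hroot : Units.mk0 z hz0 ∈ rootsOfUnity (Fintype.card Fˣ) ℂ := by
    rw [mem_rootsOfUnity, Units.ext_iff]
    push_cast
    rw [Units.val_mk0, hm, pow_mul, hz, ← map_pow, ← Units.val_pow_eq_pow_val, h]
  refine ⟨MulChar.ofRootOfUnity hroot hg, (MulChar.eq_iff hg _ _).2 ?_⟩
  rw [MulChar.pow_apply_coe, MulChar.ofRootOfUnity_spec, Units.val_mk0, hz]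

/-- `P(j, 0)` is invariant under multiplication of `j` by a square root of `-1`. -/
lemma Pkatz_mul_zero {F : Type} [Field F] [Fintype F] [DecidableEq F]
    (ψ : AddChar F ℂ) (A₄ : MulChar F ℂ) (a : F) {i : F} (hi : i ^ 2 = -1) (j : F) :
    Pkatz ψ A₄ a (i * j) 0 = Pkatz ψ A₄ a j 0 := by
  have hi0 : i ≠ 0 := by
    rintro rfl
    norm_num at hi
  have hφ : (A₄ ^ 2) (-1) = 1 := by
    rw [MulChar.pow_apply' _ two_ne_zero, ← map_pow, neg_one_sq, map_one]
  have hsum : ∑ x ∈ univ.filter (fun x : F => x ≠ 0),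
        (A₄ ^ 2) (a / x - x) * ψ (x * (i * j + 0) ^ 2 + (a / x) * (i * j - 0) ^ 2) =
      ∑ x ∈ univ.filter (fun x : F => x ≠ 0),
        (A₄ ^ 2) (a / x - x) * ψ (x * (j + 0) ^ 2 + (a / x) * (j - 0) ^ 2) := by
    refine Finset.sum_bij' (fun x _ => -x) (fun x _ => -x) (by simp) (by simp) (by simp) (by simp) ?_
    intro x _
    have h1 : a / -x - -x = -1 * (a / x - x) := by rw [div_neg]; ring
    have h2 : x * (i * j + 0) ^ 2 + (a / x) * (i * j - 0) ^ 2 =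
        -x * (j + 0) ^ 2 + (a / -x) * (j - 0) ^ 2 := by
      rw [div_neg]
      linear_combination (x * j ^ 2 + a / x * j ^ 2) * hi
    rw [h1, map_mul, hφ, one_mul, h2]
  unfold Pkatz
  rw [hsum]
  simp [hi0]

/-- If `χ` is not a fourth power, then `T(χ) = 0`. -/
theorem T_eq_zero_of_not_fourth_power
    (F : Type) [Field F] [Fintype F] [DecidableEq F]
    (hq : Fintype.card F % 4 = 1)
    (ψ : AddChar F ℂ) (hψ : ψ ≠ 1)
    (A₄ : MulChar F ℂ) (hA₄ : orderOf A₄ = 4)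
    (a : F) (ha : a ≠ 0)
    (χ : MulChar F ℂ) (hχ : ∀ ν : MulChar F ℂ, χ ≠ ν ^ 4) :
    Tmel ψ A₄ a χ = 0 := by
  obtain ⟨g, hg⟩ := IsCyclic.exists_generator (α := Fˣ)
  obtain ⟨m, hm⟩ : ∃ m, Fintype.card Fˣ = 4 * m :=
    ⟨Fintype.card F / 4, by rw [Fintype.card_units]; omega⟩
  have hord : orderOf g = 4 * m := by
    rw [orderOf_eq_card_of_forall_mem_zpowers hg, Nat.card_eq_fintype_card, hm]
  have hpos : 0 < 4 * m := hm ▸ Fintype.card_pos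
  set i : F := ((g ^ m : Fˣ) : F) with hi_def
  have hi0 : i ≠ 0 := Units.ne_zero _
  -- `i ^ 2 = g ^ (2 * m)` squares to `1` but differs from `1`, as `2 * m` is below the order of `g`.
  have hi : i ^ 2 = -1 := by
    have h4 : (i ^ 2) ^ 2 = 1 := by
      rw [hi_def, ← Units.val_pow_eq_pow_val, ← Units.val_pow_eq_pow_val, ← pow_mul, ← pow_mul,
        show m * (2 * 2) = orderOf g by omega, pow_orderOf_eq_one, Units.val_one]
    refine (sq_eq_sq_iff_eq_or_eq_neg.1 (h4.trans (one_pow 2).symm)).resolve_left ?_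
    intro h
    rw [hi_def, ← Units.val_pow_eq_pow_val, Units.val_eq_one, ← pow_mul] at h
    exact pow_ne_one_of_lt_orderOf (by omega) (by omega) h
  have hχi : χ i ≠ 1 := fun h =>
    let ⟨ν, hν⟩ := exists_fourth_root χ hg hm h
    hχ ν hν
  have key : Tmel ψ A₄ a χ = χ i * Tmel ψ A₄ a χ := by
    unfold Tmel
    rw [Finset.mul_sum]
    refine Finset.sum_bij' (fun j _ => i⁻¹ * j) (fun j _ => i * j) (by simp [hi0]) (by simp [hi0])
      (by simp [hi0]) (by simp [hi0]) ?_
    intro j _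
    rw [← mul_assoc, ← map_mul, ← Pkatz_mul_zero ψ A₄ a hi (i⁻¹ * j), mul_inv_cancel_left₀ hi0]
  have h0 : (χ i - 1) * Tmel ψ A₄ a χ = 0 := by linear_combination -key
  exact (mul_eq_zero.1 h0).resolve_left (sub_ne_zero.2 hχi)
end

section
/- P(0,0) = 2 + 2·Re( G(A₄)² / (q·A₄(−a)) ), where Re denotes the real part of a complex number. -/
/-!
At `j = k = 0` the additive character disappears and the two delta terms contribute `1 + φ(-1) = 2`,
so everything reduces to `∑_{x ≠ 0} φ(a/x - x)`. Since `φ(x²) = 1` and `φ(x) = A₄(x²)`, the summand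
is `A₄(x²) φ(a - x²)`, a function of `u = x²`. As `u` has `1 + φ(u)` square roots and `A₄ φ = A₄⁻¹`,
the sum equals `∑ A₄(u) φ(a - u) + ∑ A₄⁻¹(u) φ(a - u)` (`sum_phi_eq`).

Scaling `u` by `a` turns each of these into a Jacobi sum `J(χ, φ)`, with `χ` of order four, and
`G(χ⁻¹) J(χ, φ) = G(χ) G(φ)` together with `G(χ) G(χ⁻¹) = χ(-1) q` evaluates it as
`G(φ) G(χ)² / (q χ(-a))` (`quartic_sum_eval`). The values for `A₄` and `A₄⁻¹` are complex conjugates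
of each other (`conj_quartic_value`), so their sum is twice a real part.
-/

open Finset

section QuarticCharacter

variable {F : Type} [Field F]

lemma quartic_pow_four {χ : MulChar F ℂ} (hχ : orderOf χ = 4) {x : F} (hx : x ≠ 0) :
    χ x ^ 4 = 1 := by
  have h : χ ^ 4 = 1 := hχ ▸ pow_orderOf_eq_one χ
  rw [← MulChar.pow_apply' χ (by norm_num), h, MulChar.one_apply hx.isUnit]

lemma quartic_sq_ne_one {χ : MulChar F ℂ} (hχ : orderOf χ = 4) : χ ^ 2 ≠ 1 := by
  intro h
  have := orderOf_dvd_of_pow_eq_one h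
  rw [hχ] at this
  norm_num at this

lemma quartic_mul_sq {χ : MulChar F ℂ} (hχ : orderOf χ = 4) : χ * χ ^ 2 = χ⁻¹ := by
  have h : χ ^ 4 = 1 := hχ ▸ pow_orderOf_eq_one χ
  rw [eq_inv_iff_mul_eq_one, ← h, ← pow_succ', ← pow_succ]

lemma quartic_inv_sq {χ : MulChar F ℂ} (hχ : orderOf χ = 4) : χ⁻¹ ^ 2 = χ ^ 2 := by
  have h : χ ^ 4 = 1 := hχ ▸ pow_orderOf_eq_one χ
  rw [inv_pow, inv_eq_iff_mul_eq_one, ← h, ← pow_add]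

variable [Fintype F] [DecidableEq F]

/-- The square of a character of order four is the quadratic character: if it took the value `1` at
a nonsquare `u`, then it would be trivial, since every nonzero `y` or `y * u` is a square. -/
lemma quartic_sq_eq_quadraticChar {χ : MulChar F ℂ} (hχ : orderOf χ = 4) (u : F) :
    (χ ^ 2) u = (quadraticChar F u : ℂ) := by
  have hsq : ∀ y : F, y ≠ 0 → IsSquare y → (χ ^ 2) y = 1 := by
    rintro y hy ⟨r, rfl⟩
    have hr : r ≠ 0 := left_ne_zero_of_mul hy
    rw [MulChar.pow_apply' χ (by norm_num), map_mul, ← quartic_pow_four hχ hr]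
    ring
  by_cases hu : u = 0
  · simp [hu, MulChar.map_zero]
  rcases quadraticChar_dichotomy hu with h | h
  · rw [h, hsq u hu ((quadraticChar_one_iff_isSquare hu).1 h)]
    norm_num
  · rw [h]
    have h1 : (χ ^ 2) u ^ 2 = 1 := by
      rw [MulChar.pow_apply' χ (by norm_num), ← quartic_pow_four hχ hu]
      ring
    rcases sq_eq_one_iff.1 h1 with h2 | h2
    · exfalso
      apply quartic_sq_ne_one hχ
      ext y
      rw [MulChar.one_apply_coe]
      have hy : (y : F) ≠ 0 := y.ne_zero
      rcases quadraticChar_dichotomy hy with h3 | h3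
      · exact hsq _ hy ((quadraticChar_one_iff_isSquare hy).1 h3)
      · have hyu : (y : F) * u ≠ 0 := mul_ne_zero hy hu
        have := hsq _ hyu ((quadraticChar_one_iff_isSquare hyu).1 (by rw [map_mul, h, h3]; norm_num))
        rwa [map_mul, h2, mul_one] at this
    · rw [h2]
      norm_num

/-- Evaluation of `∑ χ(u) φ(a - u)` for `χ` of order four, through the Jacobi sum `J(χ, φ)`. -/
lemma quartic_sum_eval {ψ : AddChar F ℂ} (hψ : ψ ≠ 1) {χ : MulChar F ℂ} (hχ : orderOf χ = 4)
    {a : F} (ha : a ≠ 0) :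
    (gaussSum (χ ^ 2) ψ)⁻¹ * ∑ u, χ u * (χ ^ 2) (a - u) =
      gaussSum χ ψ ^ 2 / ((Fintype.card F : ℂ) * χ (-a)) := by
  have hprim : ψ.IsPrimitive := AddChar.IsPrimitive.of_ne_one hψ
  have hχ1 : χ ≠ 1 := by
    rintro rfl
    simp at hχ
  have hq : (Fintype.card F : ℂ) ≠ 0 := by exact_mod_cast Fintype.card_ne_zero
  have hG2 := gaussSum_ne_zero_of_nontrivial hq (quartic_sq_ne_one hχ) hprim
  have hGi := gaussSum_ne_zero_of_nontrivial hq (inv_ne_one.2 hχ1) hprim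
  have hJ := jacobiSum_mul_nontrivial (χ := χ) (φ := χ ^ 2)
    (by rw [quartic_mul_sq hχ]; exact inv_ne_one.2 hχ1) ψ
  rw [quartic_mul_sq hχ] at hJ
  have hprod : gaussSum χ ψ * gaussSum χ⁻¹ ψ = χ (-1) * Fintype.card F := by
    rw [← mul_gaussSum_inv_eq_gaussSum χ⁻¹, mul_left_comm, gaussSum_mul_gaussSum_eq_card hχ1 hprim,
      MulChar.inv_apply', inv_neg_one]
  have hscale : ∑ u, χ u * (χ ^ 2) (a - u) = χ a ^ 3 * jacobiSum χ (χ ^ 2) := by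
    rw [jacobiSum, Finset.mul_sum]
    refine (Fintype.sum_bijective _ (mulLeft_bijective₀ a ha) _ _ fun x => ?_).symm
    rw [show a - a * x = a * (1 - x) by ring, map_mul, map_mul,
      MulChar.pow_apply' χ (by norm_num) a]
    ring
  have hm : χ (-1) ^ 2 = 1 := by
    rw [← map_pow]
    simp
  have ha4 := quartic_pow_four hχ ha
  have ha0 : χ a ≠ 0 := by
    intro h
    simp [h] at ha4
  have hm0 : χ (-1) ≠ 0 := by
    intro h
    simp [h] at hm
  rw [hscale, show -a = -1 * a by ring, map_mul, inv_mul_eq_div,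
    div_eq_div_iff hG2 (mul_ne_zero hq (mul_ne_zero hm0 ha0))]
  apply mul_left_cancel₀ hGi
  linear_combination (χ a ^ 4 * Fintype.card F * χ (-1)) * hJ +
    (gaussSum χ ψ * gaussSum (χ ^ 2) ψ * Fintype.card F * χ (-1)) * ha4
    - (gaussSum χ ψ * gaussSum (χ ^ 2) ψ) * hprod

lemma conj_quartic_value (ψ : AddChar F ℂ) (χ : MulChar F ℂ) (a : F) :
    gaussSum χ⁻¹ ψ ^ 2 / ((Fintype.card F : ℂ) * χ⁻¹ (-a)) =
      (starRingEnd ℂ) (gaussSum χ ψ ^ 2 / ((Fintype.card F : ℂ) * χ (-a))) := by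
  have hm : χ⁻¹ (-1) ^ 2 = 1 := by
    rw [← map_pow]
    simp
  rw [map_div₀, map_mul, map_pow, Complex.conj_natCast, starRingEnd_apply, starRingEnd_apply,
    MulChar.star_apply', star_gaussSum_eq, ← mul_gaussSum_inv_eq_gaussSum χ⁻¹ ψ, mul_pow, hm,
    one_mul]

/-- The count of square roots turns the sum over `x` into two sums over `u = x²`. -/
lemma sum_phi_eq (hF : ringChar F ≠ 2) {χ : MulChar F ℂ} (hχ : orderOf χ = 4) (a : F) :
    ∑ x ∈ Finset.univ.filter (fun x : F => x ≠ 0), (χ ^ 2) (a / x - x) =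
      ∑ u, χ u * (χ ^ 2) (a - u) + ∑ u, χ⁻¹ u * (χ⁻¹ ^ 2) (a - u) := by
  have h1 : ∑ x ∈ Finset.univ.filter (fun x : F => x ≠ 0), (χ ^ 2) (a / x - x) =
      ∑ x : F, χ (x ^ 2) * (χ ^ 2) (a - x ^ 2) := by
    rw [Finset.sum_filter]
    refine Finset.sum_congr rfl fun x _ => ?_
    split_ifs with hx
    · have h4 := quartic_pow_four hχ hx
      rw [show a - x ^ 2 = x * (a / x - x) by field_simp, map_mul, map_pow,
        MulChar.pow_apply' χ (by norm_num) x]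
      linear_combination (-(χ ^ 2) (a / x - x)) * h4
    · simp [not_not.1 hx, MulChar.map_zero]
  rw [h1, ← Finset.sum_fiberwise (s := Finset.univ) (g := fun x : F => x ^ 2),
    ← Finset.sum_add_distrib]
  refine Finset.sum_congr rfl fun u _ => ?_
  have hcard := quadraticChar_card_sqrts hF u
  have hset : {x : F | x ^ 2 = u}.toFinset = Finset.univ.filter (fun x : F => x ^ 2 = u) := by
    ext
    simp
  rw [hset] at hcard
  have hcard' : ((Finset.univ.filter (fun x : F => x ^ 2 = u)).card : ℂ) = (χ ^ 2) u + 1 := by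
    rw [quartic_sq_eq_quadraticChar hχ]
    exact_mod_cast hcard
  rw [Finset.sum_congr rfl (g := fun _ => χ u * (χ ^ 2) (a - u))
    (fun x hx => by rw [(Finset.mem_filter.1 hx).2]), Finset.sum_const, nsmul_eq_mul, hcard',
    quartic_inv_sq hχ, ← quartic_mul_sq hχ, MulChar.mul_apply]
  ring

end QuarticCharacter

/-- Evaluation of `P(0,0)`. -/
theorem P_zero_zero
    (F : Type) [Field F] [Fintype F] [DecidableEq F]
    (hq : Fintype.card F % 4 = 1)
    (ψ : AddChar F ℂ) (hψ : ψ ≠ 1)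
    (A₄ : MulChar F ℂ) (hA₄ : orderOf A₄ = 4)
    (a : F) (ha : a ≠ 0) :
    Pkatz ψ A₄ a 0 0 =
      2 + 2 * ((gaussSum A₄ ψ ^ 2 / ((Fintype.card F : ℂ) * A₄ (-a))).re : ℂ) := by
  have hF : ringChar F ≠ 2 := by
    intro h
    have := FiniteField.even_card_of_char_two h
    omega
  have hm : (A₄ ^ 2) (-1) = 1 := by
    rw [MulChar.pow_apply' _ (by norm_num), ← map_pow]
    simp
  have hinv : orderOf A₄⁻¹ = 4 := by rw [orderOf_inv, hA₄]
  have h2 := quartic_sum_eval hψ hinv ha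
  rw [conj_quartic_value, quartic_inv_sq hA₄] at h2
  have hS := sum_phi_eq hF hA₄ a
  rw [quartic_inv_sq hA₄] at hS
  have hP : Pkatz ψ A₄ a 0 0 = 2 + (gaussSum (A₄ ^ 2) ψ)⁻¹ *
      ∑ x ∈ Finset.univ.filter (fun x : F => x ≠ 0), (A₄ ^ 2) (a / x - x) := by
    simp only [Pkatz, hm]
    norm_num
  have hre := Complex.add_conj (gaussSum A₄ ψ ^ 2 / ((Fintype.card F : ℂ) * A₄ (-a)))
  push_cast at hre
  rw [hP, hS, mul_add, quartic_sum_eval hψ hA₄ ha, h2, hre]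
end

section
/- P(0,0) = V(0)². -/
/-!
At `j = k = 0` the additive character disappears, and since `φ = A₄²` is quadratic,
`φ(a/x - x) = φ(x) φ(a - x²) = A₄(x²) φ(a - x²)` for `x ≠ 0`. Each `y` has `1 + φ(y)` square roots,
so the sum in `P(0,0)` equals `∑ y, (1 + φ(y)) A₄(y) φ(a - y)`, which splits into two Jacobi sums:
`A₄⁻¹(a) J(A₄, φ) + A₄(a) J(A₄⁻¹, φ)`. Writing these through Gauss sums and using
`G(A₄) G(A₄⁻¹) = A₄(-1) q`, the two terms divided by `G(φ)` are `G(A₄)²/τ²` and `τ²/G(A₄)²`. The two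
delta terms contribute `2`, which completes the square.
-/

open Finset

/-- A nontrivial character with trivial square is the quadratic character. -/
lemma eq_quadraticChar_of_sq_eq_one {F : Type} [Field F] [Fintype F] [DecidableEq F]
    (φ : MulChar F ℂ) (h1 : φ ≠ 1) (h2 : φ ^ 2 = 1) (y : F) :
    φ y = (quadraticChar F y : ℂ) := by
  have hsq : ∀ z : F, z ≠ 0 → φ z ^ 2 = 1 := fun z hz => by
    rw [← MulChar.pow_apply' φ two_ne_zero, h2, MulChar.one_apply hz.isUnit]
  have key : ∀ z : F, z ≠ 0 → quadraticChar F z = 1 → φ z = 1 := fun z hz h => by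
    obtain ⟨w, rfl⟩ := (quadraticChar_one_iff_isSquare hz).1 h
    rw [map_mul, ← sq, hsq w (left_ne_zero_of_mul hz)]
  obtain ⟨u, hu⟩ := (MulChar.ne_one_iff (χ := φ)).1 h1
  have hu0 : (u : F) ≠ 0 := u.ne_zero
  have hu1 : φ u = -1 :=
    (sq_eq_sq_iff_eq_or_eq_neg.1 ((hsq u hu0).trans (one_pow 2).symm)).resolve_left hu
  by_cases hy : y = 0
  · simp [hy, MulChar.map_zero]
  rcases quadraticChar_dichotomy hy with h | h
  · simp [h, key y hy h]
  · have hqu : quadraticChar F (u : F) = -1 := by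
      rcases quadraticChar_dichotomy hu0 with h' | h'
      · exact absurd (key u hu0 h') hu
      · exact h'
    -- a product of two nonsquares is a square
    have := key (u * y) (mul_ne_zero hu0 hy) (by rw [map_mul, hqu, h]; norm_num)
    rw [map_mul, hu1] at this
    rw [h]
    push_cast
    linear_combination -this

/-- A sum over squares, regrouped by the number of square roots. -/
lemma sum_comp_sq_s7 {F : Type} [Field F] [Fintype F] [DecidableEq F]
    (hF : ringChar F ≠ 2) (f : F → ℂ) :
    ∑ x : F, f (x ^ 2) = ∑ y : F, ((quadraticChar F y : ℂ) + 1) * f y := by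
  rw [← Finset.sum_fiberwise (s := Finset.univ) (g := fun x : F => x ^ 2)]
  refine Finset.sum_congr rfl fun y _ => ?_
  rw [Finset.sum_congr rfl (g := fun _ => f y)
    (fun x hx => by rw [(Finset.mem_filter.1 hx).2])]
  rw [Finset.sum_const, nsmul_eq_mul]
  congr 1
  have h := quadraticChar_card_sqrts hF y
  have h' : ({x : F | x ^ 2 = y} : Set F).toFinset = Finset.univ.filter (fun x : F => x ^ 2 = y) := by
    ext; simp
  rw [h'] at h
  exact_mod_cast h

lemma sum_mul_sub_eq_jacobiSum {F : Type} [Field F] [Fintype F] (χ φ : MulChar F ℂ)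
    (a : F) (ha : a ≠ 0) :
    ∑ y : F, χ y * φ (a - y) = χ a * φ a * jacobiSum χ φ := by
  rw [jacobiSum, Finset.mul_sum, ← Equiv.sum_comp (Equiv.mulLeft₀ a ha)]
  refine Finset.sum_congr rfl fun y _ => ?_
  rw [Equiv.mulLeft₀_apply, show a - a * y = a * (1 - y) by ring, map_mul, map_mul]
  ring

lemma gaussSum_mul_gaussSum_inv {F : Type} [Field F] [Fintype F] (χ : MulChar F ℂ) (hχ : χ ≠ 1)
    (ψ : AddChar F ℂ) (hψ : ψ ≠ 1) :
    gaussSum χ ψ * gaussSum χ⁻¹ ψ = χ⁻¹ (-1) * (Fintype.card F : ℂ) := by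
  rw [← mul_gaussSum_inv_eq_gaussSum χ⁻¹ ψ,
    ← gaussSum_mul_gaussSum_eq_card hχ (AddChar.IsPrimitive.of_ne_one hψ)]
  ring

/-- `P(0,0) = V(0)²`. -/
theorem P_zero_zero_eq_V_zero_sq
    (F : Type) [Field F] [Fintype F] [DecidableEq F]
    (hq : Fintype.card F % 4 = 1)
    (ψ : AddChar F ℂ) (hψ : ψ ≠ 1)
    (A₄ : MulChar F ℂ) (hA₄ : orderOf A₄ = 4)
    (a : F) (ha : a ≠ 0)
    (τ : ℂ) (hτ : τ ^ 2 = (Fintype.card F : ℂ) * A₄ (-a)) :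
    Pkatz ψ A₄ a 0 0 = Vkatz ψ A₄ a τ 0 ^ 2 := by
  have hF : ringChar F ≠ 2 := fun h => by
    have := FiniteField.even_card_of_char_two h
    omega
  have hA1 : A₄ ≠ 1 := fun h => by simp [h] at hA₄
  have hA4 : A₄ ^ 4 = 1 := hA₄ ▸ pow_orderOf_eq_one A₄
  have hφ1 : A₄ ^ 2 ≠ 1 := fun h => by
    have := orderOf_dvd_of_pow_eq_one h
    rw [hA₄] at this
    omega
  have hφ2 : (A₄ ^ 2) ^ 2 = 1 := by rw [← pow_mul, hA4]
  have hinv : A₄ * A₄ ^ 2 = A₄⁻¹ := by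
    rw [eq_inv_iff_mul_eq_one, ← hA4]; group
  have hinv' : A₄⁻¹ * A₄ ^ 2 = A₄ := by group
  have hi1 : A₄⁻¹ ≠ 1 := inv_ne_one.2 hA1
  have hφq := eq_quadraticChar_of_sq_eq_one _ hφ1 hφ2
  have hφsq : ∀ z : F, z ≠ 0 → (A₄ ^ 2) z * (A₄ ^ 2) z = 1 := fun z hz => by
    rw [← MulChar.mul_apply, ← sq, hφ2, MulChar.one_apply hz.isUnit]
  have hneg : (A₄ ^ 2) (-1) = 1 := by
    rw [hφq, quadraticChar_neg_one hF, ZMod.χ₄_nat_one_mod_four hq]; simp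
  have hS : ∑ x ∈ univ.filter (fun x : F => x ≠ 0), (A₄ ^ 2) (a / x - x)
      = A₄⁻¹ a * jacobiSum A₄ (A₄ ^ 2) + A₄ a * jacobiSum A₄⁻¹ (A₄ ^ 2) := by
    have h1 : ∑ x ∈ univ.filter (fun x : F => x ≠ 0), (A₄ ^ 2) (a / x - x)
        = ∑ x : F, A₄ (x ^ 2) * (A₄ ^ 2) (a - x ^ 2) := by
      rw [Finset.sum_filter]
      refine Finset.sum_congr rfl fun x _ => ?_
      split_ifs with hx
      · have : a - x ^ 2 = x * (a / x - x) := by field_simp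
        rw [this, map_mul, map_pow, ← MulChar.pow_apply' A₄ two_ne_zero, ← mul_assoc,
          hφsq x hx, one_mul]
      · have : x = 0 := not_not.1 hx
        simp [this, MulChar.map_zero]
    rw [h1, sum_comp_sq_s7 hF (fun y => A₄ y * (A₄ ^ 2) (a - y))]
    have h2 := sum_mul_sub_eq_jacobiSum A₄ (A₄ ^ 2) a ha
    have h3 := sum_mul_sub_eq_jacobiSum A₄⁻¹ (A₄ ^ 2) a ha
    rw [← MulChar.mul_apply, hinv] at h2
    rw [← MulChar.mul_apply, hinv'] at h3
    rw [← h2, ← h3, ← Finset.sum_add_distrib]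
    refine Finset.sum_congr rfl fun y _ => ?_
    rw [← hφq, ← hinv, MulChar.mul_apply]
    ring
  have hcard : (Fintype.card F : ℂ) ≠ 0 := by exact_mod_cast Fintype.card_ne_zero
  have hprim := AddChar.IsPrimitive.of_ne_one hψ
  have hG := gaussSum_ne_zero_of_nontrivial hcard hA1 hprim
  have hGi := gaussSum_ne_zero_of_nontrivial hcard hi1 hprim
  have hGφ := gaussSum_ne_zero_of_nontrivial hcard hφ1 hprim
  have hJ1 := jacobiSum_mul_nontrivial (χ := A₄) (φ := A₄ ^ 2) (by rwa [hinv]) ψ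
  have hJ2 := jacobiSum_mul_nontrivial (χ := A₄⁻¹) (φ := A₄ ^ 2) (by rwa [hinv']) ψ
  rw [hinv] at hJ1
  rw [hinv'] at hJ2
  have hGG := gaussSum_mul_gaussSum_inv A₄ hA1 ψ hψ
  have hm : A₄ (-1) * A₄ (-1) = 1 := by rw [← map_mul]; simp
  have hm' : A₄⁻¹ (-1) = A₄ (-1) := by rw [← hinv, MulChar.mul_apply, hneg, mul_one]
  have haa : A₄⁻¹ a * A₄ a = 1 := by
    rw [← MulChar.mul_apply, inv_mul_cancel, MulChar.one_apply ha.isUnit]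
  rw [hm'] at hGG
  have hτ' : τ ^ 2 = gaussSum A₄ ψ * gaussSum A₄⁻¹ ψ * A₄ a := by
    rw [hτ, hGG, ← neg_one_mul, map_mul]; ring
  have ha0 : A₄ a ≠ 0 := right_ne_zero_of_mul_eq_one haa
  have hτ0 : τ ≠ 0 := fun h => by
    rw [h] at hτ'
    exact mul_ne_zero (mul_ne_zero hG hGi) ha0 (by rw [← hτ']; norm_num)
  have hJ1' := eq_div_of_mul_eq hGi ((mul_comm _ _).trans hJ1)
  have hJ2' := eq_div_of_mul_eq hG ((mul_comm _ _).trans hJ2)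
  have hP : Pkatz ψ A₄ a 0 0 = 2 + (gaussSum (A₄ ^ 2) ψ)⁻¹ *
      (A₄⁻¹ a * jacobiSum A₄ (A₄ ^ 2) + A₄ a * jacobiSum A₄⁻¹ (A₄ ^ 2)) := by
    rw [← hS, Pkatz, hneg]
    simp
    norm_num
  have hV : Vkatz ψ A₄ a τ 0 ^ 2 = gaussSum A₄ ψ ^ 2 / τ ^ 2 + 2 + τ ^ 2 / gaussSum A₄ ψ ^ 2 := by
    rw [Vkatz, if_pos rfl]
    field_simp
    ring
  rw [hP, hV, hτ', hJ1', hJ2', eq_inv_of_mul_eq_one_left haa]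
  field_simp
  ring
end

section
/- For every j ∈ F_q*, P(j,0) = V(0)·V(j). -/
/-!
Since `j ≠ 0`, both Kronecker deltas in `P(j,0)` vanish, and with `c = j²`, `φ = A₄²`,
`G(φ) P(j,0) = ∑ₓ φ(a/x - x) ψ(c (x + a/x))`. The substitution `u = x + a/x`, `w = x - a/x`
identifies the nonzero `x` with the points of `u² - 4a = w²`, and `φ(w) = A₄(w²)`, so the sum equals
`∑ᵤ (1 + φ)(u² - 4a) A₄(u² - 4a) ψ(cu) = ∑ᵤ (A₄ + A₄⁻¹)(u² - 4a) ψ(cu)` (`sum_P_eq`).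

For a character `B` of order 4, expanding `B⁻¹(u² - 4a)` through its Gauss sum and evaluating the
resulting quadratic Gauss sum over `u` gives (`bessel_identity`)
`G(B) ∑ᵤ B⁻¹(u² - 4a) ψ(cu) = G(φ) φ(j) ∑ₓ B(x) ψ(c (x + a/x))`;
a factor `B(-4)` disappears because `-4` is a fourth power when `q ≡ 1 (mod 4)`.
Applied to `B = A₄` and `B = A₄⁻¹`, and combined with the symmetry `x ↦ a/x` and with
`G(A₄) G(A₄⁻¹) = A₄(-1) q`, this turns `P(j,0)` into `(1/G(A₄) + G(A₄)/τ²) · τ V(j) = V(0) V(j)`.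
-/

open Finset

section Helpers

set_option linter.unusedSectionVars false

variable {F : Type} [Field F] [Fintype F] [DecidableEq F]

lemma char_ne_two_of_card (hq : Fintype.card F % 4 = 1) : ringChar F ≠ 2 := by
  intro h
  have := FiniteField.even_card_iff_char_two.mp h
  omega

lemma two_ne_zero_of_card (hq : Fintype.card F % 4 = 1) : (2 : F) ≠ 0 :=
  Ring.two_ne_zero (char_ne_two_of_card hq)

lemma four_ne_zero_of_card (hq : Fintype.card F % 4 = 1) : (4 : F) ≠ 0 := by
  have h : (4 : F) = 2 * 2 := by norm_num
  rw [h]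
  exact mul_ne_zero (two_ne_zero_of_card hq) (two_ne_zero_of_card hq)

lemma apply_pow_four {B : MulChar F ℂ} (hB : orderOf B = 4) {x : F} (hx : x ≠ 0) :
    B x ^ 4 = 1 := by
  have h : B ^ 4 = 1 := hB ▸ pow_orderOf_eq_one B
  rw [← MulChar.pow_apply' B (by norm_num), h, MulChar.one_apply hx.isUnit]

lemma sq_apply (B : MulChar F ℂ) (x : F) : (B ^ 2) x = B x ^ 2 :=
  MulChar.pow_apply' B (by norm_num) x

lemma sq_ne_one_of_order {B : MulChar F ℂ} (hB : orderOf B = 4) : B ^ 2 ≠ 1 := by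
  intro h
  have := orderOf_dvd_of_pow_eq_one h
  rw [hB] at this
  omega

lemma ne_one_of_order {B : MulChar F ℂ} (hB : orderOf B = 4) : B ≠ 1 := by
  rintro rfl
  simp at hB

/-- The square of a character of order 4 is the quadratic character. -/
lemma sq_eq_quadraticChar {B : MulChar F ℂ} (hB : orderOf B = 4) (t : F) :
    (B ^ 2) t = (quadraticChar F t : ℂ) := by
  by_cases ht : t = 0
  · subst ht; simp [MulChar.map_zero]
  have key : ∀ s : F, s ≠ 0 → IsSquare s → (B ^ 2) s = 1 := by
    rintro s hs ⟨w, rfl⟩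
    have hw : w ≠ 0 := by rintro rfl; simp at hs
    rw [sq_apply, map_mul]
    linear_combination apply_pow_four hB hw
  by_cases hs : IsSquare t
  · rw [key t ht hs, (quadraticChar_one_iff_isSquare ht).mpr hs]; simp
  · obtain ⟨b, hb⟩ := MulChar.ne_one_iff.mp (sq_ne_one_of_order hB)
    have hb0 : (b : F) ≠ 0 := b.ne_zero
    have hbs : ¬ IsSquare (b : F) := fun h => hb (key _ hb0 h)
    have hbt : IsSquare ((b : F) * t) := by
      rw [← quadraticChar_one_iff_isSquare (mul_ne_zero hb0 ht), map_mul,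
        quadraticChar_neg_one_iff_not_isSquare.mpr hbs,
        quadraticChar_neg_one_iff_not_isSquare.mpr hs]
      norm_num
    have h1 := key _ (mul_ne_zero hb0 ht) hbt
    have h2 : ((B ^ 2) (b : F) - 1) * ((B ^ 2) (b : F) + 1) = 0 := by
      rw [sq_apply]; linear_combination apply_pow_four hB hb0
    have h3 : (B ^ 2) (b : F) = -1 := by
      rcases mul_eq_zero.mp h2 with h | h
      · exact absurd (sub_eq_zero.mp h) hb
      · exact eq_neg_of_add_eq_zero_left h
    rw [map_mul, h3] at h1
    rw [quadraticChar_neg_one_iff_not_isSquare.mpr hs]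
    push_cast
    linear_combination -h1

/-- Each `t` has `1 + φ(t)` square roots. -/
lemma sum_comp_sq_s8 (hq : Fintype.card F % 4 = 1) {B : MulChar F ℂ} (hB : orderOf B = 4)
    (f : F → ℂ) : ∑ w : F, f (w ^ 2) = ∑ t : F, (1 + (B ^ 2) t) * f t := by
  rw [← Finset.sum_fiberwise univ (fun w : F => w ^ 2)]
  refine Finset.sum_congr rfl fun t _ => ?_
  have h := quadraticChar_card_sqrts (char_ne_two_of_card hq) t
  have hset : {x : F | x ^ 2 = t}.toFinset = univ.filter (fun x : F => x ^ 2 = t) := by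
    ext; simp
  rw [hset] at h
  rw [Finset.sum_congr rfl (g := fun _ => f t)
    (fun x hx => by rw [(Finset.mem_filter.mp hx).2]), Finset.sum_const, nsmul_eq_mul,
    sq_eq_quadraticChar hB]
  have h' : ((univ.filter (fun x : F => x ^ 2 = t)).card : ℂ) = quadraticChar F t + 1 := by
    exact_mod_cast h
  rw [h']; ring

/-- Also valid at `t = 0`, where both sides vanish. -/
lemma inv_apply_mul_gaussSum {χ : MulChar F ℂ} (hχ : χ ≠ 1) (ψ : AddChar F ℂ) (t : F) :
    χ⁻¹ t * gaussSum χ ψ = ∑ y : F, χ y * ψ (t * y) := by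
  by_cases ht : t = 0
  · subst ht
    simp [MulChar.sum_eq_zero_of_ne_one hχ, MulChar.map_zero]
  · have := gaussSum_mulShift_eq χ ψ (Units.mk0 t ht)
    rw [Units.val_mk0] at this
    rw [← this]
    simp [gaussSum, AddChar.mulShift_apply]

/-- The quadratic Gauss sum with a linear term. -/
lemma quadratic_gauss (hq : Fintype.card F % 4 = 1) {B : MulChar F ℂ} (hB : orderOf B = 4)
    {ψ : AddChar F ℂ} (hψ : ψ ≠ 1) {y : F} (hy : y ≠ 0) (c : F) :
    ∑ u : F, ψ (y * u ^ 2 + c * u) =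
      (B ^ 2) y * gaussSum (B ^ 2) ψ * ψ (-(c ^ 2 / (4 * y))) := by
  have h2 := two_ne_zero_of_card hq
  have h4 := four_ne_zero_of_card hq
  have hsum : ∑ t : F, ψ (y * t) = 0 := by
    rw [← AddChar.sum_eq_zero_of_ne_one hψ]
    exact Fintype.sum_bijective _ (mulLeft_bijective₀ y hy) _ _ fun x => rfl
  have hinv : (B ^ 2)⁻¹ y = (B ^ 2) y := by
    rw [MulChar.inv_apply_eq_inv', sq_apply]
    refine inv_eq_of_mul_eq_one_left ?_
    linear_combination apply_pow_four hB hy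
  have hpure : ∑ u : F, ψ (y * u ^ 2) = (B ^ 2) y * gaussSum (B ^ 2) ψ := by
    rw [sum_comp_sq_s8 hq hB (fun t => ψ (y * t)), ← hinv,
      inv_apply_mul_gaussSum (sq_ne_one_of_order hB)]
    simp_rw [add_mul, Finset.sum_add_distrib, one_mul]
    rw [hsum, zero_add]
  rw [← hpure, Finset.sum_mul]
  -- completing the square
  refine Fintype.sum_equiv (Equiv.addRight (c / (2 * y))) _ _ fun u => ?_
  rw [← AddChar.map_add_eq_mul]
  congr 1
  simp only [Equiv.coe_addRight]
  field_simp
  ring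

/-- `-4 = (1 + i)⁴` where `i² = -1`. -/
lemma apply_neg_four (hq : Fintype.card F % 4 = 1) {B : MulChar F ℂ} (hB : orderOf B = 4) :
    B (-4) = 1 := by
  have hsq : IsSquare (-1 : F) := FiniteField.isSquare_neg_one_iff.mpr (by omega)
  obtain ⟨i, hi⟩ := hsq
  have h2 := two_ne_zero_of_card hq
  have e : (-4 : F) = (1 + i) ^ 4 := by
    linear_combination (i ^ 2 + 4 * i + 5) * hi
  have hne : (1 + i) ≠ 0 := by
    intro h
    rw [h] at e
    have : (2 : F) * 2 = 0 := by linear_combination -e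
    exact mul_ne_zero h2 h2 this
  rw [e, map_pow, apply_pow_four hB hne]

/-- The finite field analogue of Basset's integral for the Bessel function `K`. -/
lemma bessel_identity (hq : Fintype.card F % 4 = 1) {B : MulChar F ℂ} (hB : orderOf B = 4)
    {ψ : AddChar F ℂ} (hψ : ψ ≠ 1) (a : F) {j : F} (hj : j ≠ 0) :
    gaussSum B ψ * ∑ u : F, B⁻¹ (u ^ 2 - 4 * a) * ψ (j ^ 2 * u) =
      gaussSum (B ^ 2) ψ * ((B ^ 2) j * ∑ x : F, B x * ψ (j ^ 2 * (x + a / x))) := by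
  have h2 := two_ne_zero_of_card hq
  have h4 := four_ne_zero_of_card hq
  calc gaussSum B ψ * ∑ u : F, B⁻¹ (u ^ 2 - 4 * a) * ψ (j ^ 2 * u)
      = ∑ u : F, ∑ y : F, B y * ψ ((u ^ 2 - 4 * a) * y) * ψ (j ^ 2 * u) := by
        rw [Finset.mul_sum]
        refine Finset.sum_congr rfl fun u _ => ?_
        rw [← Finset.sum_mul, ← inv_apply_mul_gaussSum (ne_one_of_order hB)]
        ring
    _ = ∑ y : F, B y * ψ (-(4 * a * y)) * ∑ u : F, ψ (y * u ^ 2 + j ^ 2 * u) := by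
        rw [Finset.sum_comm]
        refine Finset.sum_congr rfl fun y _ => ?_
        rw [Finset.mul_sum]
        refine Finset.sum_congr rfl fun u _ => ?_
        rw [mul_assoc, mul_assoc, ← AddChar.map_add_eq_mul, ← AddChar.map_add_eq_mul]
        congr 2
        ring
    _ = ∑ y : F, gaussSum (B ^ 2) ψ *
          (B⁻¹ y * ψ (-(4 * a * y) - (j ^ 2) ^ 2 / (4 * y))) := by
        refine Finset.sum_congr rfl fun y _ => ?_
        by_cases hy : y = 0
        · subst hy; simp [MulChar.map_zero]
        rw [quadratic_gauss hq hB hψ hy, sub_eq_add_neg, AddChar.map_add_eq_mul]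
        have hinv : B⁻¹ y = B y * (B ^ 2) y := by
          rw [MulChar.inv_apply_eq_inv', sq_apply]
          refine inv_eq_of_mul_eq_one_left ?_
          linear_combination apply_pow_four hB hy
        rw [hinv]; ring
    _ = gaussSum (B ^ 2) ψ * ((B ^ 2) j * ∑ x : F, B x * ψ (j ^ 2 * (x + a / x))) := by
        rw [← Finset.mul_sum, Finset.mul_sum (a := (B ^ 2) j)]
        congr 1
        have hinvol : Function.Involutive (fun x : F => -(j ^ 2) / (4 * x)) := by
          intro x
          by_cases hx : x = 0
          · subst hx; simp
          · field_simp
        refine Fintype.sum_equiv hinvol.toPerm _ _ fun y => ?_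
        simp only [Function.Involutive.coe_toPerm]
        by_cases hy : y = 0
        · subst hy; simp [MulChar.map_zero]
        have harg : j ^ 2 * (-(j ^ 2) / (4 * y) + a / (-(j ^ 2) / (4 * y))) =
            -(4 * a * y) - (j ^ 2) ^ 2 / (4 * y) := by
          field_simp
          ring
        have hB' : (B ^ 2) j * B (-(j ^ 2) / (4 * y)) = B⁻¹ y := by
          rw [sq_apply, ← map_pow, ← map_mul]
          have e : j ^ 2 * (-(j ^ 2) / (4 * y)) = j ^ 4 * (-4)⁻¹ * y⁻¹ := by
            have : (-4 : F) ≠ 0 := neg_ne_zero.mpr h4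
            field_simp
          rw [e, map_mul, map_mul, map_pow, apply_pow_four hB hj, ← MulChar.inv_apply',
            ← MulChar.inv_apply', MulChar.inv_apply_eq_inv' B (-4), apply_neg_four hq hB]
          simp
        rw [harg, ← mul_assoc, hB']

/-- The sum in `P(j,0)` as a sum over `u = x + a/x`. -/
lemma sum_P_eq (hq : Fintype.card F % 4 = 1) {B : MulChar F ℂ} (hB : orderOf B = 4)
    (ψ : AddChar F ℂ) {a : F} (ha : a ≠ 0) (c : F) :
    ∑ x ∈ univ.filter (fun x : F => x ≠ 0), (B ^ 2) (a / x - x) * ψ (c * (x + a / x)) =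
      ∑ u : F, B (u ^ 2 - 4 * a) * ψ (c * u) + ∑ u : F, B⁻¹ (u ^ 2 - 4 * a) * ψ (c * u) := by
  have h2 := two_ne_zero_of_card hq
  have h4 := four_ne_zero_of_card hq
  calc _ = ∑ p ∈ (univ : Finset (F × F)).filter (fun p => p.2 ^ 2 = p.1 ^ 2 - 4 * a),
          B (p.2 ^ 2) * ψ (c * p.1) := by
        -- the second coordinate `w = x - a/x` parametrizes the square roots of `u² - 4a`
        refine Finset.sum_nbij' (fun x => (x + a / x, x - a / x)) (fun p => (p.1 + p.2) / 2)
          ?_ ?_ ?_ ?_ ?_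
        · intro x hx
          have hx : x ≠ 0 := by simpa using hx
          simp only [Finset.mem_filter, Finset.mem_univ, true_and]
          field_simp
          ring
        · rintro ⟨u, w⟩ hp
          have hp : w ^ 2 = u ^ 2 - 4 * a := by simpa using hp
          simp only [Finset.mem_filter, Finset.mem_univ, true_and]
          intro h
          have h' : u + w = 0 := by
            rcases div_eq_zero_iff.mp h with h | h
            · exact h
            · exact absurd h h2
          have : 4 * a = 0 := by linear_combination (u - w) * h' + hp
          exact mul_ne_zero h4 ha this
        · intro x hx
          simp only [add_add_sub_cancel]
          rw [← two_mul, mul_div_cancel_left₀ _ h2]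
        · rintro ⟨u, w⟩ hp
          have hp : w ^ 2 = u ^ 2 - 4 * a := by simpa using hp
          have hne : u + w ≠ 0 := by
            intro h'
            have : 4 * a = 0 := by linear_combination (u - w) * h' + hp
            exact mul_ne_zero h4 ha this
          have hx : a / ((u + w) / 2) = (u - w) / 2 := by
            rw [div_eq_iff (div_ne_zero hne h2)]
            field_simp
            linear_combination hp
          simp only [hx, Prod.mk.injEq]
          constructor <;> field_simp <;> ring
        · intro x hx
          simp only
          rw [sq_apply, ← map_pow]
          congr 2
          ring
    _ = ∑ u : F, ∑ w : F, (if w ^ 2 = u ^ 2 - 4 * a then B (w ^ 2) else 0) * ψ (c * u) := by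
        rw [Finset.sum_filter, Fintype.sum_prod_type]
        refine Finset.sum_congr rfl fun u _ => Finset.sum_congr rfl fun w _ => ?_
        simp only [ite_mul, zero_mul]
    _ = _ := by
        rw [← Finset.sum_add_distrib]
        refine Finset.sum_congr rfl fun u _ => ?_
        rw [← Finset.sum_mul,
          sum_comp_sq_s8 hq hB (fun t => if t = u ^ 2 - 4 * a then B t else 0)]
        simp only [mul_ite, mul_zero, Finset.sum_ite_eq', Finset.mem_univ, if_true]
        rw [← add_mul]
        congr 1
        by_cases ht : u ^ 2 - 4 * a = 0
        · rw [ht]; simp [MulChar.map_zero]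
        · have hinv : B⁻¹ (u ^ 2 - 4 * a) = B (u ^ 2 - 4 * a) * (B ^ 2) (u ^ 2 - 4 * a) := by
            rw [MulChar.inv_apply_eq_inv', sq_apply]
            refine inv_eq_of_mul_eq_one_left ?_
            linear_combination apply_pow_four hB ht
          rw [hinv]; ring

/-- The symmetry `x ↦ a/x` of the Kloosterman sum. -/
lemma sum_inv_eq (B : MulChar F ℂ) (ψ : AddChar F ℂ) {a : F} (ha : a ≠ 0) (c : F) :
    B a * ∑ x : F, B⁻¹ x * ψ (c * (x + a / x)) = ∑ x : F, B x * ψ (c * (x + a / x)) := by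
  have hinvol : Function.Involutive (fun x : F => a / x) := by
    intro x
    by_cases hx : x = 0
    · subst hx; simp
    · field_simp
  rw [Finset.mul_sum]
  refine Fintype.sum_equiv hinvol.toPerm _ _ fun x => ?_
  simp only [Function.Involutive.coe_toPerm]
  have hx : a / (a / x) = x := hinvol x
  rw [hx, add_comm (a / x) x, div_eq_mul_inv a x, map_mul B, MulChar.inv_apply']
  ring

/-- Rescaling `x ↦ j² x` in the sum defining `V(j)`. -/
lemma sum_V_eq (B : MulChar F ℂ) (ψ : AddChar F ℂ) (a : F) {j : F} (hj : j ≠ 0) :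
    ∑ x ∈ univ.filter (fun x : F => x ≠ 0), B x * ψ (x + a * j ^ 4 / x) =
      (B ^ 2) j * ∑ x : F, B x * ψ (j ^ 2 * (x + a / x)) := by
  have h : ∑ x ∈ univ.filter (fun x : F => x ≠ 0), B x * ψ (x + a * j ^ 4 / x) =
      ∑ x : F, B x * ψ (x + a * j ^ 4 / x) := by
    refine Finset.sum_filter_of_ne fun x _ hx h0 => hx ?_
    subst h0; simp [MulChar.map_zero]
  rw [h, Finset.mul_sum]
  refine (Fintype.sum_bijective _ (mulLeft_bijective₀ (j ^ 2) (pow_ne_zero 2 hj)) _ _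
    fun x => ?_).symm
  by_cases hx : x = 0
  · subst hx; simp [MulChar.map_zero]
  rw [map_mul B, map_pow B, sq_apply, ← mul_assoc]
  congr 2
  field_simp

end Helpers

/-- `P(j,0) = V(0)·V(j)` for all nonzero `j`. -/
theorem P_j_zero_eq_V_zero_mul_V_j
    (F : Type) [Field F] [Fintype F] [DecidableEq F]
    (hq : Fintype.card F % 4 = 1)
    (ψ : AddChar F ℂ) (hψ : ψ ≠ 1)
    (A₄ : MulChar F ℂ) (hA₄ : orderOf A₄ = 4)
    (a : F) (ha : a ≠ 0)
    (τ : ℂ) (hτ : τ ^ 2 = (Fintype.card F : ℂ) * A₄ (-a)) :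
    ∀ j : F, j ≠ 0 → Pkatz ψ A₄ a j 0 = Vkatz ψ A₄ a τ 0 * Vkatz ψ A₄ a τ j := by
  intro j hj
  set φ := A₄ ^ 2 with hφ
  have hψp : ψ.IsPrimitive := AddChar.IsPrimitive.of_ne_one hψ
  have hcard : (Fintype.card F : ℂ) ≠ 0 := by
    exact_mod_cast Fintype.card_ne_zero
  have hA' : orderOf A₄⁻¹ = 4 := by rw [orderOf_inv, hA₄]
  have hinvsq : A₄⁻¹ ^ 2 = φ := by
    have h : A₄ ^ 4 = 1 := hA₄ ▸ pow_orderOf_eq_one A₄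
    rw [hφ, inv_pow]
    refine inv_eq_of_mul_eq_one_left ?_
    rw [← pow_add]; exact h
  have hG := gaussSum_ne_zero_of_nontrivial hcard (ne_one_of_order hA₄) hψp
  have hG' := gaussSum_ne_zero_of_nontrivial hcard (ne_one_of_order hA') hψp
  have hGφ := gaussSum_ne_zero_of_nontrivial hcard (sq_ne_one_of_order hA₄) hψp
  have hGG : gaussSum A₄ ψ * gaussSum A₄⁻¹ ψ = A₄ (-1) * Fintype.card F := by
    rw [← mul_gaussSum_inv_eq_gaussSum A₄⁻¹ ψ, mul_left_comm,
      gaussSum_mul_gaussSum_eq_card (ne_one_of_order hA₄) hψp, MulChar.inv_apply', inv_neg_one]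
  have hAa : A₄ a ≠ 0 := fun h => by
    have := apply_pow_four hA₄ ha
    rw [h] at this; norm_num at this
  have hτ' : τ ^ 2 = gaussSum A₄ ψ * gaussSum A₄⁻¹ ψ * A₄ a := by
    rw [hτ, hGG, neg_eq_neg_one_mul a, map_mul]; ring
  have hτ0 : τ ≠ 0 := by
    rintro rfl
    have : gaussSum A₄ ψ * gaussSum A₄⁻¹ ψ * A₄ a = 0 := by rw [← hτ']; ring
    exact mul_ne_zero (mul_ne_zero hG hG') hAa this
  have hb1 := bessel_identity hq hA₄ hψ a hj
  have hb2 := bessel_identity hq hA' hψ a hj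
  have hsym := sum_inv_eq A₄ ψ ha (j ^ 2)
  have hP := sum_P_eq hq hA₄ ψ ha (j ^ 2)
  have hsumP : ∑ x ∈ univ.filter (fun x : F => x ≠ 0),
      φ (a / x - x) * ψ (x * (j + 0) ^ 2 + (a / x) * (j - 0) ^ 2) =
      ∑ x ∈ univ.filter (fun x : F => x ≠ 0), φ (a / x - x) * ψ (j ^ 2 * (x + a / x)) := by
    refine Finset.sum_congr rfl fun x _ => ?_
    congr 2
    ring
  rw [hinvsq, inv_inv] at hb2
  rw [← hφ] at hb1 hP hGφ
  have hj' : j ≠ -0 := by simpa using hj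
  rw [Pkatz, Vkatz, Vkatz, if_neg hj, if_neg hj', if_neg hj, if_pos rfl, ← hφ, hsumP, hP,
    sum_V_eq A₄ ψ a hj, ← hφ]
  generalize (∑ u : F, A₄ (u ^ 2 - 4 * a) * ψ (j ^ 2 * u)) = S₁ at *
  generalize (∑ u : F, A₄⁻¹ (u ^ 2 - 4 * a) * ψ (j ^ 2 * u)) = S₂ at *
  generalize (∑ x : F, A₄ x * ψ (j ^ 2 * (x + a / x))) = K at *
  generalize (∑ x : F, A₄⁻¹ x * ψ (j ^ 2 * (x + a / x))) = K' at *
  generalize gaussSum A₄ ψ = G at *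
  generalize gaussSum A₄⁻¹ ψ = G' at *
  generalize gaussSum φ ψ = Gφ at *
  have e1 : S₁ = Gφ * (φ j * K') / G' := by rw [eq_div_iff hG']; linear_combination hb2
  have e2 : S₂ = Gφ * (φ j * K) / G := by rw [eq_div_iff hG]; linear_combination hb1
  have e3 : (G / τ + τ / G) * (τ⁻¹ * (φ j * K)) = (G / τ ^ 2 + 1 / G) * (φ j * K) := by
    field_simp
  rw [e3, hτ', e1, e2, ← hsym]
  field_simp
  ring
end
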